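/- Let q be any prime power. Then the weak normal covering number of PSL_4(q) equals 2: there exist two proper subgroups H and K of PSL_4(q) such that every element g of PSL_4(q) satisfies phi(g) in H or phi(g) in K for some automorphism phi of PSL_4(q), and no single proper subgroup L of PSL_4(q) has the property that every element of PSL_4(q) is mapped into L by some automorphism. -/

import Mathlib

/-- The projective special linear group `PSL_n(F)`: the quotient of `SL_n(F)` by its center. -/
abbrev ProjSL (n : ℕ) (F : Type*) [Field F] : Type _ :=
  Matrix.SpecialLinearGroup (Fin n) F ⧸
    Subgroup.center (Matrix.SpecialLinearGroup (Fin n) F)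

/-!
For the upper bound, an element of `SL_4(q)` either has an eigenvector, and is conjugate to an
element fixing a given point, or all irreducible factors of its characteristic polynomial have even
degree, and it commutes with an embedded field of order `q ^ 2`.

For the lower bound, let `L` be a subgroup meeting every orbit of the automorphism group. As
automorphisms preserve transvections, `L` contains one, so it meets the root subgroup of a point and
that of a hyperplane. After an automorphism, `L` also contains the element `b` that fixes a point
and cyclically permutes the points of a complementary hyperplane, and an image of a power `s` of a
Singer cycle. A subgroup containing `b` that meets the root subgroup of the fixed point contains it.
If `L` did not, the number of root subgroups of points meeting `L` would be divisible by
`1 + q + ⋯ + q ^ (n - 2)`, because of `b`, and by `1 + q + ⋯ + q ^ (n - 1)` up to a factor `q - 1`,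
because of `s`; these are coprime, and there are not enough points. Dually, `L` contains the root
subgroup of the hyperplane fixed by `b`, and the two root subgroups generate `PSL_n(q)`.
-/

namespace ProjSL

open Matrix Module
open Matrix.SpecialLinearGroup (coe_mul coe_one coe_pow coe_transpose mem_center_iff)
open scoped MatrixGroups Pointwise

variable {n : ℕ} {F : Type*} [Field F]

/-! ### Elements and automorphisms of `PSL_n(F)` -/

/-- The projection `SL_n(F) → PSL_n(F)`. -/
abbrev mk : SL(n, F) →* ProjSL n F := QuotientGroup.mk' _

lemma mk_surjective : Function.Surjective (mk : SL(n, F) →* ProjSL n F) :=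
  QuotientGroup.mk'_surjective _

/-- The automorphism of `PSL_n(F)` induced by an automorphism of `SL_n(F)`. -/
def liftAut : MulAut SL(n, F) →* MulAut (ProjSL n F) where
  toFun e := QuotientGroup.congr _ _ e (Subgroup.characteristic_iff_map_eq.mp inferInstance e)
  map_one' := MulEquiv.ext (mk_surjective.forall.2 fun _ => rfl)
  map_mul' _ _ := MulEquiv.ext (mk_surjective.forall.2 fun _ => rfl)

lemma liftAut_mk (e : MulAut SL(n, F)) (g : SL(n, F)) : liftAut e (mk g) = mk (e g) := rfl

/-- Conjugation by invertible matrices, as automorphisms of `SL_n(F)`. -/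
def conjGL : GL (Fin n) F →* MulAut SL(n, F) where
  toFun P :=
    { toFun g := ⟨P * g * (P⁻¹ : GL (Fin n) F), by rw [det_units_conj, g.2]⟩
      invFun g := ⟨(P⁻¹ : GL (Fin n) F) * g * P, by rw [det_units_conj', g.2]⟩
      left_inv g := Subtype.ext (by simp [mul_assoc])
      right_inv g := Subtype.ext (by simp [mul_assoc])
      map_mul' g h := Subtype.ext <|
        show P * (g * h).1 * (P⁻¹ : GL (Fin n) F).1 = P * g * P⁻¹.1 * (P * h * P⁻¹.1) by
          simp only [coe_mul, mul_assoc, Units.inv_mul_cancel_left] }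
  map_one' := MulEquiv.ext fun g => Subtype.ext <|
    show (1 : GL (Fin n) F).1 * g.1 * (1⁻¹ : GL (Fin n) F).1 = g by simp
  map_mul' P Q := MulEquiv.ext fun g => Subtype.ext <|
    show (P * Q).1 * g.1 * ((P * Q)⁻¹ : GL (Fin n) F).1 = P.1 * (Q.1 * g * Q⁻¹.1) * P⁻¹.1 by
      simp only [Units.val_mul, _root_.mul_inv_rev, mul_assoc]

lemma conjGL_coe (P : GL (Fin n) F) (g : SL(n, F)) :
    (conjGL P g : Matrix (Fin n) (Fin n) F) = P * g * (P⁻¹ : GL (Fin n) F) := rfl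

lemma conj_mk (g : SL(n, F)) :
    MulAut.conj (mk g) = liftAut (conjGL (Matrix.SpecialLinearGroup.toGL g)) :=
  MulEquiv.ext (mk_surjective.forall.2 fun _ => rfl)

lemma transpose_inv (g : SL(n, F)) : g⁻¹.transpose = g.transpose⁻¹ := by
  refine eq_inv_of_mul_eq_one_left (Subtype.ext ?_)
  rw [coe_mul, coe_transpose, coe_transpose, ← transpose_mul, ← coe_mul, mul_inv_cancel, coe_one,
    transpose_one]

lemma transpose_inv_transpose_inv (g : SL(n, F)) : (g⁻¹.transpose)⁻¹.transpose = g := by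
  rw [← transpose_inv, inv_inv]
  rfl

/-- The contragredient (inverse transpose) automorphism of `SL_n(F)`. -/
def contragredient : MulAut SL(n, F) where
  toFun g := g⁻¹.transpose
  invFun g := g⁻¹.transpose
  left_inv := transpose_inv_transpose_inv
  right_inv := transpose_inv_transpose_inv
  map_mul' g h := Subtype.ext (by simp)

variable (n F) in
/-- The duality of `PSL_n(F)`, induced by the contragredient; it exchanges the roles of points and
hyperplanes. -/
def dualAut : MulAut (ProjSL n F) := liftAut contragredient

lemma dualAut_mk (g : SL(n, F)) : dualAut n F (mk g) = mk g⁻¹.transpose := rfl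

lemma mk_eq_mk {g h : SL(n, F)} : mk g = mk h ↔ ∃ r : F, h.1 = r • g.1 := by
  rw [QuotientGroup.mk'_apply, QuotientGroup.mk'_apply, QuotientGroup.eq, mem_center_iff]
  constructor
  · rintro ⟨r, -, hr⟩
    refine ⟨r, ?_⟩
    rw [← mul_inv_cancel_left g h, coe_mul, ← hr, scalar_apply, ← smul_one_eq_diagonal,
      Matrix.mul_smul, mul_one]
  · rintro ⟨r, hr⟩
    refine ⟨r, by simpa [hr, det_smul] using h.2, ?_⟩
    rw [coe_mul, hr, Matrix.mul_smul, ← coe_mul, inv_mul_cancel, coe_one, scalar_apply,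
      smul_one_eq_diagonal]

lemma eq_of_mk_eq_mk {g h : SL(n, F)} {u : Fin n → F} (hu : u ≠ 0) (hg : g.1 *ᵥ u = u)
    (hh : h.1 *ᵥ u = u) (e : mk g = mk h) : g = h := by
  obtain ⟨r, hr⟩ := mk_eq_mk.1 e
  have hru : r • u = (1 : F) • u := by
    rw [one_smul]
    nth_rewrite 2 [← hh]
    rw [hr, smul_mulVec, hg]
  rw [smul_left_injective F hu hru, one_smul] at hr
  exact Subtype.ext hr.symm

/-! ### Transvections -/

/-- The transvection `x ↦ x + (f ⬝ᵥ x) • v`; its centre is spanned by `v` and its hyperplane is the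
kernel of `f`. -/
def transv (v f : Fin n → F) (h : f ⬝ᵥ v = 0) : SL(n, F) :=
  ⟨1 + vecMulVec v f, by
    rw [vecMulVec_eq Unit, det_one_add_replicateCol_mul_replicateRow, h, add_zero]⟩

lemma transv_coe {v f : Fin n → F} (h : f ⬝ᵥ v = 0) : (transv v f h).1 = 1 + vecMulVec v f := rfl

lemma vecMulVec_mulVec_eq (v f u : Fin n → F) : vecMulVec v f *ᵥ u = (f ⬝ᵥ u) • v := by
  rw [vecMulVec_mulVec, op_smul_eq_smul]

lemma transv_mulVec_of_dotProduct_eq_zero {v f u : Fin n → F} (h : f ⬝ᵥ v = 0)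
    (hu : f ⬝ᵥ u = 0) : (transv v f h).1 *ᵥ u = u := by
  rw [transv_coe, add_mulVec, one_mulVec, vecMulVec_mulVec_eq, hu, zero_smul, add_zero]

lemma vecMulVec_mul_vecMulVec_eq_zero {v f w g : Fin n → F} (h : f ⬝ᵥ w = 0) :
    vecMulVec v f * vecMulVec w g = 0 := by
  rw [vecMulVec_mul_vecMulVec, h, zero_smul, vecMulVec_zero]

lemma transv_mul_transv_left {v f g : Fin n → F} (h : f ⬝ᵥ v = 0) (h' : g ⬝ᵥ v = 0) :
    transv v f h * transv v g h' = transv v (f + g) (by rw [add_dotProduct, h, h', add_zero]) :=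
  Subtype.ext (by
    simp only [coe_mul, transv_coe, vecMulVec_add, mul_add, add_mul, one_mul, mul_one,
      vecMulVec_mul_vecMulVec_eq_zero h]
    abel)

lemma transv_mul_transv_right {v w f : Fin n → F} (h : f ⬝ᵥ v = 0) (h' : f ⬝ᵥ w = 0) :
    transv v f h * transv w f h' = transv (v + w) f (by rw [dotProduct_add, h, h', add_zero]) :=
  Subtype.ext (by
    simp only [coe_mul, transv_coe, add_vecMulVec, mul_add, add_mul, one_mul, mul_one,
      vecMulVec_mul_vecMulVec_eq_zero h']
    abel)

lemma transv_inv {v f : Fin n → F} (h : f ⬝ᵥ v = 0) :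
    (transv v f h)⁻¹ = transv v (-f) (by rw [neg_dotProduct, h, neg_zero]) :=
  inv_eq_of_mul_eq_one_right (Subtype.ext (by simp [transv_mul_transv_left, transv_coe]))

lemma dualAut_transv {v f : Fin n → F} (h : f ⬝ᵥ v = 0) :
    dualAut n F (mk (transv v f h)) =
      mk (transv (-f) v (by rw [dotProduct_neg, dotProduct_comm, h, neg_zero])) :=
  (dualAut_mk _).trans <| congrArg mk <| Subtype.ext (by
    rw [transv_inv, coe_transpose, transv_coe, transv_coe, transpose_add, transpose_one,
      transpose_vecMulVec])

lemma conjGL_transv (P : GL (Fin n) F) {v f : Fin n → F} (h : f ⬝ᵥ v = 0) :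
    conjGL P (transv v f h) = transv (P.1 *ᵥ v) (f ᵥ* (P⁻¹ : GL (Fin n) F).1) (by
      rw [← dotProduct_mulVec, mulVec_mulVec, Units.inv_mul, one_mulVec, h]) :=
  Subtype.ext (by
    rw [conjGL_coe, transv_coe, transv_coe, mul_add, add_mul, mul_one, Units.mul_inv, mul_vecMulVec,
      vecMulVec_mul])

lemma exists_dotProduct_eq_zero {m : ℕ} (h : m < n) (f : Fin m → Fin n → F) :
    ∃ u ≠ 0, ∀ i, f i ⬝ᵥ u = 0 := by
  have hker := LinearMap.ker_ne_bot_of_finrank_lt (f := mulVecLin (of f)) (by simpa using h)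
  obtain ⟨u, hu, hu0⟩ := (Submodule.ne_bot_iff _).1 hker
  exact ⟨u, hu0, fun i => congrFun hu i⟩

lemma mk_transv_eq_iff (hn : 3 ≤ n) {v f w g : Fin n → F} {h : f ⬝ᵥ v = 0} {h' : g ⬝ᵥ w = 0} :
    mk (transv v f h) = mk (transv w g h') ↔ vecMulVec v f = vecMulVec w g := by
  refine ⟨fun e => ?_, fun e => congrArg mk (Subtype.ext (by rw [transv_coe, transv_coe, e]))⟩
  obtain ⟨u, hu, hfu⟩ := exists_dotProduct_eq_zero hn ![f, g]
  have := eq_of_mk_eq_mk hu (transv_mulVec_of_dotProduct_eq_zero h (hfu 0))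
    (transv_mulVec_of_dotProduct_eq_zero h' (hfu 1)) e
  exact add_left_cancel (congrArg Subtype.val this)

lemma exists_dotProduct_eq_one {f : Fin n → F} (hf : f ≠ 0) : ∃ u, f ⬝ᵥ u = 1 := by
  obtain ⟨i, hi⟩ := Function.ne_iff.1 hf
  exact ⟨Pi.single i (f i)⁻¹, by rw [dotProduct_single, mul_inv_cancel₀ hi]⟩

lemma exists_smul_of_vecMulVec_eq {v f w g : Fin n → F} (hf : f ≠ 0)
    (e : vecMulVec v f = vecMulVec w g) : ∃ c : F, v = c • w := by
  obtain ⟨u, hu⟩ := exists_dotProduct_eq_one hf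
  refine ⟨g ⬝ᵥ u, ?_⟩
  rw [← vecMulVec_mulVec_eq, ← e, vecMulVec_mulVec_eq, hu, one_smul]

lemma exists_smul_of_vecMulVec_eq' {v f w g : Fin n → F} (hv : v ≠ 0)
    (e : vecMulVec v f = vecMulVec w g) : ∃ c : F, f = c • g :=
  exists_smul_of_vecMulVec_eq hv (by rw [← transpose_vecMulVec, e, transpose_vecMulVec])

lemma exists_smul_symm {v w : Fin n → F} (hv : v ≠ 0) (h : ∃ c : F, v = c • w) :
    ∃ c : F, w = c • v := by
  obtain ⟨c, rfl⟩ := h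
  exact ⟨c⁻¹, (inv_smul_smul₀ (smul_ne_zero_iff.1 hv).1 w).symm⟩

lemma exists_dotProduct_eq_one_and_eq_zero {v w : Fin n → F} (h : ¬ ∃ c : F, v = c • w) :
    ∃ α, α ⬝ᵥ v = 1 ∧ α ⬝ᵥ w = 0 := by
  have hv : v ∉ F ∙ w := fun hv => h ((Submodule.mem_span_singleton.1 hv).imp fun _ => Eq.symm)
  obtain ⟨φ, hφv, hφw⟩ := Submodule.exists_le_ker_of_notMem hv
  obtain ⟨α, rfl⟩ := (dotProductEquiv F (Fin n)).surjective φ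
  rw [Submodule.span_singleton_le_iff_mem, LinearMap.mem_ker] at hφw
  refine ⟨(α ⬝ᵥ v)⁻¹ • α, ?_, ?_⟩
  · rw [smul_dotProduct, smul_eq_mul]
    exact inv_mul_cancel₀ hφv
  · rw [smul_dotProduct, show α ⬝ᵥ w = 0 from hφw, smul_zero]

lemma exists_smul_of_mk_transv_mul_eq (hn : 4 ≤ n) {v f w g u k : Fin n → F} {h : f ⬝ᵥ v = 0}
    {h' : g ⬝ᵥ w = 0} {h'' : k ⬝ᵥ u = 0} (hv : v ≠ 0) (hg : g ≠ 0)
    (e : mk (transv v f h) * mk (transv w g h') = mk (transv u k h'')) :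
    (∃ c : F, w = c • v) ∨ ∃ c : F, f = c • g := by
  by_contra! hc
  obtain ⟨x, hx, hfgk⟩ := exists_dotProduct_eq_zero hn ![f, g, k]
  have hfix : (transv v f h * transv w g h').1 *ᵥ x = x := by
    rw [coe_mul, ← mulVec_mulVec, transv_mulVec_of_dotProduct_eq_zero h' (hfgk 1),
      transv_mulVec_of_dotProduct_eq_zero h (hfgk 0)]
  have hmat := congrArg Subtype.val (eq_of_mk_eq_mk hx hfix
    (transv_mulVec_of_dotProduct_eq_zero h'' (hfgk 2)) e)
  have hrow (α : Fin n → F) :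
      (α ⬝ᵥ v) • f + ((α ⬝ᵥ v) * (f ⬝ᵥ w) + α ⬝ᵥ w) • g = (α ⬝ᵥ u) • k := by
    have := congrArg (α ᵥ* ·) hmat
    simp only [coe_mul, transv_coe, ← vecMul_vecMul, vecMul_add, vecMul_one, vecMul_vecMulVec,
      add_dotProduct, smul_dotProduct, smul_eq_mul] at this
    rw [← add_right_inj α, ← this]
    module
  obtain ⟨β, hβw, hβv⟩ := exists_dotProduct_eq_one_and_eq_zero fun ⟨c, hcw⟩ => hc.1 c hcw
  obtain ⟨α, hαv, hαw⟩ := exists_dotProduct_eq_one_and_eq_zero fun hcv =>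
    (exists_smul_symm hv hcv).elim hc.1
  have hgk : g = (β ⬝ᵥ u) • k := by simpa [hβw, hβv] using hrow β
  have hfk : f + (f ⬝ᵥ w) • g = (α ⬝ᵥ u) • k := by simpa [hαw, hαv] using hrow α
  obtain ⟨c, hck⟩ := exists_smul_symm hg ⟨_, hgk⟩
  refine hc.2 ((α ⬝ᵥ u) * c - f ⬝ᵥ w) ?_
  rw [sub_smul, mul_smul, ← hck, ← hfk, add_sub_cancel_right]

/-! ### Root subgroups -/

/-- The group of transvections of `PSL_n(F)` with centre spanned by `v`. -/
def pointGroup (v : Fin n → F) : Subgroup (ProjSL n F) where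
  carrier := {x | ∃ f h, x = mk (transv v f h)}
  one_mem' := ⟨0, zero_dotProduct v, congrArg mk (Subtype.ext (by simp [transv_coe]))⟩
  mul_mem' := by
    rintro _ _ ⟨f, h, rfl⟩ ⟨g, h', rfl⟩
    exact ⟨_, _, by rw [← map_mul, transv_mul_transv_left]⟩
  inv_mem' := by
    rintro _ ⟨f, h, rfl⟩
    exact ⟨_, _, by rw [← map_inv, transv_inv]⟩

/-- The group of transvections of `PSL_n(F)` with hyperplane `f ⬝ᵥ x = 0`. -/
def hyperplaneGroup (f : Fin n → F) : Subgroup (ProjSL n F) :=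
  dualAut n F • pointGroup f

lemma mem_pointGroup {v : Fin n → F} {x : ProjSL n F} :
    x ∈ pointGroup v ↔ ∃ f h, x = mk (transv v f h) := Iff.rfl

lemma mem_hyperplaneGroup {f : Fin n → F} {x : ProjSL n F} :
    x ∈ hyperplaneGroup f ↔ ∃ v h, x = mk (transv v f h) := by
  rw [hyperplaneGroup, Subgroup.mem_smul_pointwise_iff_exists]
  constructor
  · rintro ⟨_, ⟨g, h, rfl⟩, rfl⟩
    exact ⟨-g, _, dualAut_transv h⟩
  · rintro ⟨v, h, rfl⟩
    have h' : (-v) ⬝ᵥ f = 0 := by rw [neg_dotProduct, dotProduct_comm, h, neg_zero]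
    refine ⟨_, ⟨-v, h', rfl⟩, (dualAut_transv h').trans ?_⟩
    simp only [neg_neg]

lemma pointGroup_le_pointGroup {v w : Fin n → F} (h : ∃ c : F, v = c • w) :
    pointGroup v ≤ pointGroup w := by
  rintro _ ⟨f, hf, rfl⟩
  obtain ⟨c, rfl⟩ := h
  refine ⟨c • f, by rwa [smul_dotProduct, ← dotProduct_smul], congrArg mk (Subtype.ext ?_)⟩
  rw [transv_coe, transv_coe, smul_vecMulVec, vecMulVec_smul]

lemma hyperplaneGroup_le_hyperplaneGroup {f g : Fin n → F} (h : ∃ c : F, f = c • g) :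
    hyperplaneGroup f ≤ hyperplaneGroup g :=
  Subgroup.pointwise_smul_le_pointwise_smul_iff.2 (pointGroup_le_pointGroup h)

/-- The elements of `PSL_n(F)` represented by a transvection (or by the identity). -/
def IsTransvection (x : ProjSL n F) : Prop := ∃ v f h, x = mk (transv v f h)

lemma transv_eq_one_iff {v f : Fin n → F} {h : f ⬝ᵥ v = 0} :
    transv v f h = 1 ↔ v = 0 ∨ f = 0 := by
  rw [← vecMulVec_eq_zero, ← add_eq_left (a := (1 : Matrix (Fin n) (Fin n) F)), ← transv_coe h]
  exact ⟨congrArg Subtype.val, fun e => Subtype.ext e⟩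

lemma IsTransvection.exists_ne_zero {x : ProjSL n F} (hx : IsTransvection x) (h1 : x ≠ 1) :
    ∃ v f h, x = mk (transv v f h) ∧ v ≠ 0 ∧ f ≠ 0 := by
  obtain ⟨v, f, h, rfl⟩ := hx
  refine ⟨v, f, h, rfl, ?_⟩
  rw [← not_or, ← transv_eq_one_iff (h := h)]
  exact fun h0 => h1 (by rw [h0, map_one])

/-- The subgroups of `PSL_n(F)` consisting of transvections. -/
def IsTransvectionSubgroup (X : Subgroup (ProjSL n F)) : Prop := ∀ x ∈ X, IsTransvection x

lemma isTransvectionSubgroup_pointGroup (v : Fin n → F) :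
    IsTransvectionSubgroup (pointGroup v) := by
  rintro _ ⟨f, h, rfl⟩
  exact ⟨v, f, h, rfl⟩

lemma isTransvectionSubgroup_hyperplaneGroup (f : Fin n → F) :
    IsTransvectionSubgroup (hyperplaneGroup f) := by
  intro x hx
  obtain ⟨v, h, rfl⟩ := mem_hyperplaneGroup.1 hx
  exact ⟨v, f, h, rfl⟩

lemma exists_smul_trans {u v w : Fin n → F} (huv : ∃ c : F, u = c • v) (hvw : ∃ c : F, v = c • w) :
    ∃ c : F, u = c • w := by
  obtain ⟨c, rfl⟩ := huv
  obtain ⟨d, rfl⟩ := hvw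
  exact ⟨c * d, smul_smul c d w⟩

/-- Any two of the transvections share their centre or their hyperplane, so they all share one of
the two. -/
lemma IsTransvectionSubgroup.le_pointGroup_or_le_hyperplaneGroup (hn : 4 ≤ n)
    {X : Subgroup (ProjSL n F)} (hX : IsTransvectionSubgroup X) :
    (∃ v ≠ 0, X ≤ pointGroup v) ∨ ∃ f ≠ 0, X ≤ hyperplaneGroup f := by
  have pair {v f w g : Fin n → F} {h : f ⬝ᵥ v = 0} {h' : g ⬝ᵥ w = 0}
      (hx : mk (transv v f h) ∈ X) (hy : mk (transv w g h') ∈ X) (hv : v ≠ 0) (hg : g ≠ 0) :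
      (∃ c : F, w = c • v) ∨ ∃ c : F, f = c • g := by
    obtain ⟨_, _, _, e⟩ := hX _ (mul_mem hx hy)
    exact exists_smul_of_mk_transv_mul_eq hn hv hg e
  rcases X.bot_or_exists_ne_one with rfl | ⟨x, hx, hx1⟩
  · have : Nonempty (Fin n) := ⟨⟨0, by omega⟩⟩
    obtain ⟨v, hv⟩ := exists_ne (0 : Fin n → F)
    exact .inl ⟨v, hv, bot_le⟩
  obtain ⟨v, f, h, rfl, hv, hf⟩ := (hX x hx).exists_ne_zero hx1
  by_cases hXv : X ≤ pointGroup v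
  · exact .inl ⟨v, hv, hXv⟩
  obtain ⟨y, hy, hyv⟩ := SetLike.not_le_iff_exists.1 hXv
  obtain ⟨w, g, h', rfl, hw, hg⟩ := (hX y hy).exists_ne_zero fun h1 => hyv (h1 ▸ one_mem _)
  have hwv : ¬ ∃ c : F, w = c • v := fun hwv => hyv (pointGroup_le_pointGroup hwv ⟨g, h', rfl⟩)
  have hfg := (pair hx hy hv hg).resolve_left hwv
  refine .inr ⟨g, hg, fun z hz => ?_⟩
  by_cases hz1 : z = 1
  · exact hz1 ▸ one_mem _
  obtain ⟨u, k, h'', rfl, hu, hk⟩ := (hX z hz).exists_ne_zero hz1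
  refine hyperplaneGroup_le_hyperplaneGroup ?_ (mem_hyperplaneGroup.2 ⟨u, h'', rfl⟩)
  rcases pair hy hz hw hk with huw | hgk
  · rcases pair hx hz hv hk with huv | hfk
    · exact absurd (exists_smul_trans (exists_smul_symm hu huw) huv) hwv
    · exact exists_smul_trans (exists_smul_symm hf hfk) hfg
  · exact exists_smul_symm hg hgk

lemma exists_smul_of_pointGroup_le (hn : 3 ≤ n) {v w : Fin n → F}
    (h : pointGroup v ≤ pointGroup w) : ∃ c : F, v = c • w := by
  obtain ⟨f, hf, hfv⟩ := exists_dotProduct_eq_zero (m := 1) (by omega) ![v]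
  obtain ⟨g, h', e⟩ := h (mem_pointGroup.2 ⟨f, (dotProduct_comm _ _).trans (hfv 0), rfl⟩)
  exact exists_smul_of_vecMulVec_eq hf ((mk_transv_eq_iff hn).1 e)

lemma exists_smul_of_hyperplaneGroup_le (hn : 3 ≤ n) {f g : Fin n → F}
    (h : hyperplaneGroup f ≤ hyperplaneGroup g) : ∃ c : F, f = c • g :=
  exists_smul_of_pointGroup_le hn (Subgroup.pointwise_smul_le_pointwise_smul_iff.1 h)

lemma not_pointGroup_le_hyperplaneGroup (hn : 3 ≤ n) {v g : Fin n → F} (hv : v ≠ 0) :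
    ¬ pointGroup v ≤ hyperplaneGroup g := by
  have hsmul {f : Fin n → F} (hle : pointGroup v ≤ hyperplaneGroup g) (h : f ⬝ᵥ v = 0) :
      ∃ c : F, f = c • g := by
    obtain ⟨u, h', e⟩ := mem_hyperplaneGroup.1 (hle (mem_pointGroup.2 ⟨f, h, rfl⟩))
    exact exists_smul_of_vecMulVec_eq' hv ((mk_transv_eq_iff hn).1 e)
  intro hle
  obtain ⟨f, hf, hfv⟩ := exists_dotProduct_eq_zero (m := 1) (by omega) ![v]
  obtain ⟨x, hx⟩ := exists_dotProduct_eq_one hf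
  obtain ⟨f', hf', hf'v⟩ := exists_dotProduct_eq_zero (m := 2) (by omega) ![v, x]
  obtain ⟨c, rfl⟩ := exists_smul_trans (hsmul hle ((dotProduct_comm _ _).trans (hf'v 0)))
    (exists_smul_symm hf (hsmul hle ((dotProduct_comm _ _).trans (hfv 0))))
  have hc : c = 0 := by
    have := hf'v 1
    rwa [cons_val_one, cons_val_fin_one, dotProduct_comm, smul_dotProduct, hx, smul_eq_mul,
      mul_one] at this
  exact hf' (by rw [hc, zero_smul])

/-- The root subgroups of `PSL_n(F)`: the maximal subgroups consisting of transvections. -/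
def IsRootSubgroup (X : Subgroup (ProjSL n F)) : Prop := Maximal IsTransvectionSubgroup X

lemma isRootSubgroup_pointGroup (hn : 4 ≤ n) {v : Fin n → F} (hv : v ≠ 0) :
    IsRootSubgroup (pointGroup v) := by
  refine ⟨isTransvectionSubgroup_pointGroup v, fun Y hY hle => ?_⟩
  rcases hY.le_pointGroup_or_le_hyperplaneGroup hn with ⟨w, -, h⟩ | ⟨g, -, h⟩
  · exact h.trans (pointGroup_le_pointGroup
      (exists_smul_symm hv (exists_smul_of_pointGroup_le (by omega) (hle.trans h))))
  · exact (not_pointGroup_le_hyperplaneGroup (by omega) hv (hle.trans h)).elim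

lemma IsRootSubgroup.eq_pointGroup_or_eq_hyperplaneGroup (hn : 4 ≤ n) {X : Subgroup (ProjSL n F)}
    (hX : IsRootSubgroup X) :
    (∃ v ≠ 0, X = pointGroup v) ∨ ∃ f ≠ 0, X = hyperplaneGroup f := by
  rcases hX.1.le_pointGroup_or_le_hyperplaneGroup hn with ⟨v, hv, h⟩ | ⟨f, hf, h⟩
  · exact .inl ⟨v, hv, hX.eq_of_le (isTransvectionSubgroup_pointGroup v) h⟩
  · exact .inr ⟨f, hf, hX.eq_of_le (isTransvectionSubgroup_hyperplaneGroup f) h⟩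

lemma liftAut_conjGL_smul_pointGroup (P : GL (Fin n) F) (v : Fin n → F) :
    liftAut (conjGL P) • pointGroup v = pointGroup (P.1 *ᵥ v) := by
  have hle (P : GL (Fin n) F) (v : Fin n → F) :
      liftAut (conjGL P) • pointGroup v ≤ pointGroup (P.1 *ᵥ v) := by
    intro x hx
    obtain ⟨_, ⟨f, h, rfl⟩, rfl⟩ := (Subgroup.mem_smul_pointwise_iff_exists _ _ _).1 hx
    exact ⟨_, _, congrArg mk (conjGL_transv P h)⟩
  refine (hle P v).antisymm (Subgroup.subset_pointwise_smul_iff.2 ?_)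
  simpa [map_inv] using hle P⁻¹ (P.1 *ᵥ v)

lemma conj_mk_smul_pointGroup (g : SL(n, F)) (v : Fin n → F) :
    MulAut.conj (mk g) • pointGroup v = pointGroup (g.1 *ᵥ v) :=
  (congrArg (· • pointGroup v) (conj_mk g)).trans (liftAut_conjGL_smul_pointGroup _ v)

lemma conj_apply_smul {G : Type*} [Group G] (φ : MulAut G) (x : G) (X : Subgroup G) :
    MulAut.conj (φ x) • φ • X = φ • MulAut.conj x • X := by
  rw [smul_smul, smul_smul]
  exact congrArg (· • X) (MulEquiv.ext fun y => by simp)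

lemma conj_mk_smul_hyperplaneGroup (g : SL(n, F)) (f : Fin n → F) :
    MulAut.conj (mk g) • hyperplaneGroup f = hyperplaneGroup (g⁻¹.transpose.1 *ᵥ f) := by
  rw [← transpose_inv_transpose_inv g, ← dualAut_mk, hyperplaneGroup, conj_apply_smul,
    conj_mk_smul_pointGroup, transpose_inv_transpose_inv, hyperplaneGroup]

lemma exists_mulVec_eq {v w : Fin n → F} (hv : v ≠ 0) (hw : w ≠ 0) :
    ∃ P : Matrix (Fin n) (Fin n) F, P.det ≠ 0 ∧ P *ᵥ w = v ∧
      ∀ f : Fin n → F, f ⬝ᵥ v = f ⬝ᵥ w → f ᵥ* P = f := by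
  obtain ⟨h, hhw, hhv⟩ : ∃ h : Fin n → F, h ⬝ᵥ w = 1 ∧ h ⬝ᵥ v ≠ 0 := by
    by_cases hvw : ∃ c : F, v = c • w
    · obtain ⟨c, rfl⟩ := hvw
      obtain ⟨h, hh⟩ := exists_dotProduct_eq_one hw
      rw [dotProduct_comm] at hh
      exact ⟨h, hh, by simpa [hh] using left_ne_zero_of_smul hv⟩
    · obtain ⟨α, hα, hα'⟩ := exists_dotProduct_eq_one_and_eq_zero hvw
      obtain ⟨β, hβ⟩ := exists_dotProduct_eq_one hw
      rw [dotProduct_comm] at hβ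
      by_cases hβv : β ⬝ᵥ v = 0
      · exact ⟨β + α, by simp [hβ, hα'], by simp [hα, hβv]⟩
      · exact ⟨β, hβ, hβv⟩
  refine ⟨1 + vecMulVec (v - w) h, ?_, ?_, fun f hf => ?_⟩
  · rwa [vecMulVec_eq Unit, det_one_add_replicateCol_mul_replicateRow, dotProduct_sub, hhw,
      add_sub_cancel]
  · rw [add_mulVec, one_mulVec, vecMulVec_mulVec_eq, hhw, one_smul, add_sub_cancel]
  · rw [vecMul_add, vecMul_one, vecMul_vecMulVec, dotProduct_sub, hf, sub_self, zero_smul, add_zero]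

/-- Move the centre first, then the hyperplane while keeping the centre. -/
lemma exists_conjGL_transv_eq {v f w g : Fin n → F} (h : f ⬝ᵥ v = 0) (h' : g ⬝ᵥ w = 0) (hv : v ≠ 0)
    (hf : f ≠ 0) (hw : w ≠ 0) (hg : g ≠ 0) : ∃ P, conjGL P (transv w g h') = transv v f h := by
  obtain ⟨P₀, hP₀, hPw, -⟩ := exists_mulVec_eq hv hw
  let P : GL (Fin n) F := .mkOfDetNeZero P₀ hP₀
  let k : Fin n → F := g ᵥ* P⁻¹.1
  have hgk : k ᵥ* P₀ = g := by
    rw [vecMul_vecMul, show P⁻¹.1 * P₀ = 1 from P.inv_mul, vecMul_one]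
  have hk : k ≠ 0 := fun h0 => hg (by rw [← hgk, h0, zero_vecMul])
  have hkv : k ⬝ᵥ v = 0 := by rw [← hPw, dotProduct_mulVec, hgk, h']
  obtain ⟨Q₀, hQ₀, hQf, hQ⟩ := exists_mulVec_eq hk hf
  let Q : GL (Fin n) F := .mkOfDetNeZero Q₀ᵀ (by rwa [det_transpose])
  have hQv : Q.1 *ᵥ v = v := by
    change Q₀ᵀ *ᵥ v = v
    rw [mulVec_transpose, hQ v (by rw [dotProduct_comm, hkv, dotProduct_comm, h])]
  have hkf : k ᵥ* Q⁻¹.1 = f := by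
    rw [← hQf, ← vecMul_transpose, vecMul_vecMul, show Q₀ᵀ * Q⁻¹.1 = 1 from Q.mul_inv, vecMul_one]
  refine ⟨Q * P, ?_⟩
  have hPw' : P.1 *ᵥ w = v := hPw
  rw [map_mul, MulAut.mul_apply, conjGL_transv, conjGL_transv]
  exact Subtype.ext (by rw [transv_coe, transv_coe, hPw', hQv, hkf])

/-! ### Automorphisms preserve transvections -/

lemma mul_apply_self_of_isUpperTriangular {M N : Matrix (Fin n) (Fin n) F}
    (hM : M.IsUpperTriangular) (hN : N.IsUpperTriangular) (i : Fin n) :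
    (M * N) i i = M i i * N i i := by
  rw [mul_apply]
  refine Finset.sum_eq_single i (fun j _ hj => ?_) (by simp)
  rcases hj.lt_or_gt with h | h
  · rw [hM h, zero_mul]
  · rw [hN h, mul_zero]

variable (n F) in
/-- The upper triangular matrices with diagonal entries `1`. -/
def unitriangular : Subgroup SL(n, F) where
  carrier := {g | g.1.IsUpperTriangular ∧ ∀ i, g.1 i i = 1}
  one_mem' := ⟨blockTriangular_one, fun i => one_apply_eq i⟩
  mul_mem' {g h} hg hh := ⟨hg.1.mul hh.1, fun i => by
    rw [coe_mul, mul_apply_self_of_isUpperTriangular hg.1 hh.1, hg.2, hh.2, mul_one]⟩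
  inv_mem' {g} hg := by
    have hmul : g.1 * g⁻¹.1 = 1 := by rw [← coe_mul, mul_inv_cancel, coe_one]
    have hinv : (g⁻¹).1.IsUpperTriangular := by
      have := invertibleOfRightInverse g.1 _ hmul
      rw [← inv_eq_right_inv hmul]
      exact blockTriangular_inv_of_blockTriangular hg.1
    refine ⟨hinv, fun i => ?_⟩
    have h := mul_apply_self_of_isUpperTriangular hg.1 hinv i
    rw [hmul, hg.2 i, one_mul, one_apply_eq] at h
    exact h.symm

/-- Unitriangular matrices correspond to their entries above the diagonal. -/
def unitriangularEquiv : unitriangular n F ≃ ((j : Fin n) → {i // i < j} → F) where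
  toFun g j i := g.1.1 i j
  invFun t :=
    let M : Matrix (Fin n) (Fin n) F :=
      of fun i j => if h : i < j then t j ⟨i, h⟩ else (1 : Matrix (Fin n) (Fin n) F) i j
    have hM : M.IsUpperTriangular := fun i j (h : j < i) => by
      simp [M, h.not_gt, h.ne']
    have hdiag (i : Fin n) : M i i = 1 := by simp [M]
    ⟨⟨M, by simp [det_of_isUpperTriangular hM, hdiag]⟩, hM, hdiag⟩
  left_inv g := by
    refine Subtype.ext (Subtype.ext (Matrix.ext fun i j => ?_))
    rcases lt_trichotomy i j with h | rfl | h
    · simp [h]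
    · simp [g.2.2 i]
    · simpa [h.not_gt, h.ne'] using (g.2.1 h).symm
  right_inv t := by
    ext j i
    simp [i.2]

lemma natCard_unitriangular :
    Nat.card (unitriangular n F) = ∏ j : Fin n, Nat.card F ^ (j : ℕ) := by
  rw [Nat.card_congr unitriangularEquiv, Nat.card_pi]
  refine Finset.prod_congr rfl fun j _ => ?_
  rw [Nat.card_fun, Nat.card_eq_fintype_card (α := {i // i < j}), Fintype.card_subtype,
    Finset.filter_gt_eq_Iio, Fin.card_Iio]

lemma not_dvd_index_unitriangular [Finite F] {p : ℕ} (hp : p.Prime) (hpF : p ∣ Nat.card F) :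
    ¬ p ∣ (unitriangular n F).index := by
  have := Fintype.ofFinite F
  intro hdvd
  have hGL : Nat.card SL(n, F) ∣ Nat.card (GL (Fin n) F) :=
    Subgroup.card_dvd_of_injective _ Matrix.SpecialLinearGroup.toGL_injective
  have hprod : Nat.card (GL (Fin n) F) =
      (∏ j : Fin n, Nat.card F ^ (j : ℕ)) * ∏ j : Fin n, (Nat.card F ^ (n - j) - 1) := by
    rw [card_GL_field, ← Nat.card_eq_fintype_card, ← Finset.prod_mul_distrib]
    refine Finset.prod_congr rfl fun j _ => ?_
    rw [Nat.mul_sub, mul_one, ← pow_add, Nat.add_sub_cancel' j.2.le]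
  rw [hprod, ← (unitriangular n F).card_mul_index, natCard_unitriangular] at hGL
  obtain ⟨j, -, hj⟩ := (hp.prime.dvd_finsetProd_iff _).1 <| hdvd.trans <|
    Nat.dvd_of_mul_dvd_mul_left (Finset.prod_pos fun j _ => pow_pos Nat.card_pos _) hGL
  have hpow : p ∣ Nat.card F ^ (n - j) := hpF.trans (dvd_pow_self _ (Nat.sub_ne_zero_of_lt j.2))
  exact hp.not_dvd_one ((Nat.dvd_sub_iff_right (Nat.one_le_pow _ _ Nat.card_pos) hpow).1 hj)

lemma mulVec_single_zero_of_mem_unitriangular {g : SL(n + 1, F)}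
    (hg : g ∈ unitriangular (n + 1) F) :
    g.1 *ᵥ Pi.single 0 1 = Pi.single 0 1 := by
  ext i
  rw [mulVec_single_one, col_apply]
  rcases (Fin.zero_le i).eq_or_lt with rfl | h
  · rw [hg.2, Pi.single_eq_same]
  · rw [hg.1 h, Pi.single_eq_of_ne h.ne']

lemma single_last_vecMul_of_mem_unitriangular {g : SL(n + 1, F)}
    (hg : g ∈ unitriangular (n + 1) F) (a : F) :
    Pi.single (Fin.last n) a ᵥ* g.1 = Pi.single (Fin.last n) a := by
  ext j
  rw [single_vecMul, Pi.smul_apply, row_apply, smul_eq_mul]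
  rcases (Fin.le_last j).eq_or_lt with rfl | h
  · rw [hg.2, Pi.single_eq_same, mul_one]
  · have hz : g.1 (Fin.last n) j = 0 := hg.1 h
    rw [hz, Pi.single_eq_of_ne h.ne, mul_zero]

lemma transvection_mem_unitriangular {i j : Fin n} (h : i < j) (a : F) :
    SpecialLinearGroup.transvection h.ne a ∈ unitriangular n F := by
  refine ⟨blockTriangular_transvection h.le a, fun k => ?_⟩
  rw [SpecialLinearGroup.transvection_coe, Matrix.add_apply, one_apply_eq, single_apply, if_neg,
    add_zero]
  rintro ⟨rfl, rfl⟩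
  exact h.ne rfl

lemma transvection_eq_transv {i j : Fin n} (h : i ≠ j) (a : F) :
    SpecialLinearGroup.transvection h a = transv (Pi.single i 1) (Pi.single j a) (by simp [h]) :=
  Subtype.ext <| by
    rw [SpecialLinearGroup.transvection_coe, transv_coe]
    ext k l
    simp [single_apply, vecMulVec_apply, Pi.single_apply, ← ite_and, and_comm, eq_comm]

lemma commute_transvection_zero_last (a : F) {g : SL(n + 2, F)} (hg : g ∈ unitriangular (n + 2) F) :
    Commute g (SpecialLinearGroup.transvection (Fin.last_pos (n := n)).ne a) := by
  refine Subtype.ext ?_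
  rw [transvection_eq_transv, coe_mul, coe_mul, transv_coe, mul_add, add_mul, mul_vecMulVec,
    vecMulVec_mul, mulVec_single_zero_of_mem_unitriangular hg,
    single_last_vecMul_of_mem_unitriangular hg, mul_one, one_mul]

lemma exists_eq_transvection_of_commute {g : SL(n + 2, F)} (hg : g ∈ unitriangular (n + 2) F)
    (hcomm : ∀ h ∈ unitriangular (n + 2) F, Commute g h) :
    ∃ a : F, g = SpecialLinearGroup.transvection (Fin.last_pos (n := n)).ne a := by
  have hsingle {i j : Fin (n + 2)} (h : i < j) : Commute (single i j 1) g.1 := by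
    have := congrArg Subtype.val (hcomm _ (transvection_mem_unitriangular h 1))
    rw [coe_mul, coe_mul, SpecialLinearGroup.transvection_coe, mul_add, add_mul, mul_one,
      one_mul] at this
    exact (add_left_cancel this).symm
  refine ⟨g.1 0 (Fin.last _), Subtype.ext (Matrix.ext fun i j => ?_)⟩
  rw [SpecialLinearGroup.transvection_coe, Matrix.add_apply]
  rcases lt_trichotomy i j with h | rfl | h
  · rw [one_apply_ne h.ne, zero_add, single_apply]
    split_ifs with h0
    · rw [h0.1, h0.2]
    · rcases (Fin.le_last j).lt_or_eq with hj | rfl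
      · exact col_eq_zero_of_commute_single (hsingle hj) h.ne
      · have hi : 0 < i := (Fin.zero_le i).lt_of_ne fun e => h0 ⟨e, rfl⟩
        exact row_eq_zero_of_commute_single (hsingle hi) h.ne'
  · rw [hg.2, one_apply_eq, single_apply, if_neg, add_zero]
    rintro ⟨rfl, h⟩
    exact Fin.last_pos.ne' h
  · rw [hg.1 h, one_apply_ne h.ne', zero_add, single_apply, if_neg]
    rintro ⟨rfl, rfl⟩
    exact h.not_ge (Fin.zero_le _)

lemma exists_sylow_coe_eq_map_unitriangular (n : ℕ) (F : Type*) [Field F] [Finite F] :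
    ∃ (p : ℕ) (_ : Fact p.Prime) (P : Sylow p (ProjSL n F)),
      (P : Subgroup (ProjSL n F)) = (unitriangular n F).map mk := by
  have := Fintype.ofFinite F
  obtain ⟨p, k, hp, hk, hF⟩ := (isPrimePow_nat_iff _).1 (FiniteField.isPrimePow_card F)
  rw [← Nat.card_eq_fintype_card] at hF
  have hgroup : IsPGroup p (unitriangular n F) := IsPGroup.of_card (n := ∑ j : Fin n, k * j) <| by
    rw [natCard_unitriangular, ← hF, ← Finset.prod_pow_eq_pow_sum]
    exact Finset.prod_congr rfl fun j _ => (pow_mul _ _ _).symm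
  have : Fact p.Prime := ⟨hp⟩
  exact ⟨p, this, (hgroup.toSylow (not_dvd_index_unitriangular hp
    (hF ▸ dvd_pow_self p hk.ne'))).mapSurjective mk_surjective, rfl⟩

lemma exists_conj_apply_mem_and_commute {G : Type*} [Group G] {p : ℕ} [Fact p.Prime]
    [Finite (Sylow p G)] {P : Sylow p G} {x : G} (hx : x ∈ P) (hcomm : ∀ y ∈ P, Commute x y)
    (φ : MulAut G) :
    ∃ g, MulAut.conj g (φ x) ∈ P ∧ ∀ y ∈ P, Commute (MulAut.conj g (φ x)) y := by
  obtain ⟨g, hg⟩ := MulAction.exists_smul_eq G (φ • P) P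
  have hP : (MulAut.conj g * φ) • P = P := by rwa [mul_smul]
  have hmem {y : G} : y ∈ P ↔ ∃ z ∈ P, MulAut.conj g (φ z) = y := by
    conv_lhs => rw [← hP]
    exact Subgroup.mem_smul_pointwise_iff_exists _ _ _
  refine ⟨g, hmem.2 ⟨x, hx, rfl⟩, fun y hy => ?_⟩
  obtain ⟨z, hz, rfl⟩ := hmem.1 hy
  exact ((hcomm z hz).map φ).map (MulAut.conj g)

lemma exists_eq_add_two {v f : Fin n → F} (h : f ⬝ᵥ v = 0) (hv : v ≠ 0) (hf : f ≠ 0) :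
    ∃ m, n = m + 2 := by
  match n with
  | 0 => exact absurd (Subsingleton.elim v 0) hv
  | 1 =>
    rw [dotProduct, Fin.sum_univ_one, mul_eq_zero] at h
    refine (h.elim (fun h => hf ?_) fun h => hv ?_).elim <;>
      exact funext fun i => by rwa [Subsingleton.elim i 0]
  | m + 2 => exact ⟨m, rfl⟩

lemma IsTransvection.liftAut_conjGL {x : ProjSL n F} (hx : IsTransvection x) (P : GL (Fin n) F) :
    IsTransvection (liftAut (conjGL P) x) := by
  obtain ⟨v, f, h, rfl⟩ := hx
  rw [liftAut_mk, conjGL_transv]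
  exact ⟨_, _, _, rfl⟩

lemma isTransvection_of_mem_map_unitriangular {x : ProjSL (n + 2) F}
    (hx : x ∈ (unitriangular (n + 2) F).map mk)
    (hcomm : ∀ y ∈ (unitriangular (n + 2) F).map mk, Commute x y) : IsTransvection x := by
  obtain ⟨g, hg, rfl⟩ := hx
  have hfix (h : SL(n + 2, F)) (hh : h ∈ unitriangular (n + 2) F) :=
    mulVec_single_zero_of_mem_unitriangular (n := n + 1) hh
  have hcomm' (h : SL(n + 2, F)) (hh : h ∈ unitriangular (n + 2) F) : Commute g h :=
    eq_of_mk_eq_mk (by simp) (hfix _ (mul_mem hg hh)) (hfix _ (mul_mem hh hg))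
      (hcomm _ (Subgroup.mem_map_of_mem _ hh))
  obtain ⟨a, rfl⟩ := exists_eq_transvection_of_commute hg hcomm'
  rw [transvection_eq_transv]
  exact ⟨_, _, _, rfl⟩

/-- Up to conjugation in `GL_n(F)` a transvection is an element of a Sylow subgroup commuting with
that subgroup, and all such elements are transvections. -/
lemma IsTransvection.apply [Finite F] (φ : MulAut (ProjSL n F)) {x : ProjSL n F}
    (hx : IsTransvection x) : IsTransvection (φ x) := by
  rcases eq_or_ne x 1 with rfl | h1
  · rwa [map_one]
  obtain ⟨v, f, h, rfl, hv, hf⟩ := hx.exists_ne_zero h1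
  obtain ⟨m, rfl⟩ := exists_eq_add_two h hv hf
  have h0 : (0 : Fin (m + 2)) ≠ Fin.last _ := Fin.last_pos.ne
  obtain ⟨P, hP⟩ := exists_conjGL_transv_eq (w := Pi.single 0 1) (g := Pi.single (Fin.last _) 1) h
    (by simp [h0]) hv hf (by simp) (by simp)
  obtain ⟨p, _, S, hS⟩ := exists_sylow_coe_eq_map_unitriangular (m + 2) F
  have hmem {y} : y ∈ S ↔ y ∈ (unitriangular (m + 2) F).map mk := by rw [← hS]; rfl
  obtain ⟨g, hg⟩ := exists_conj_apply_mem_and_commute (P := S)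
    (x := mk (SpecialLinearGroup.transvection h0 1))
    (hmem.2 (Subgroup.mem_map_of_mem _ (transvection_mem_unitriangular Fin.last_pos 1)))
    (fun y hy => by
      obtain ⟨u, hu, rfl⟩ := hmem.1 hy
      exact (commute_transvection_zero_last 1 hu).symm.map mk)
    (φ * liftAut (conjGL P))
  simp only [hmem] at hg
  obtain ⟨g, rfl⟩ := mk_surjective g
  have hconj := (isTransvection_of_mem_map_unitriangular hg.1 hg.2).liftAut_conjGL g.toGL⁻¹
  rwa [transvection_eq_transv, MulAut.mul_apply, liftAut_mk, hP, conj_mk, map_inv, map_inv,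
    MulAut.inv_apply_self] at hconj

lemma IsTransvectionSubgroup.smul [Finite F] (φ : MulAut (ProjSL n F)) {X : Subgroup (ProjSL n F)}
    (hX : IsTransvectionSubgroup X) : IsTransvectionSubgroup (φ • X) := by
  intro x hx
  obtain ⟨y, hy, rfl⟩ := (Subgroup.mem_smul_pointwise_iff_exists _ _ _).1 hx
  exact (hX y hy).apply φ

lemma IsRootSubgroup.smul [Finite F] (φ : MulAut (ProjSL n F)) {X : Subgroup (ProjSL n F)}
    (hX : IsRootSubgroup X) : IsRootSubgroup (φ • X) := by
  refine ⟨hX.prop.smul φ, fun Y hY hXY => Subgroup.subset_pointwise_smul_iff.2 ?_⟩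
  exact hX.le_of_ge (hY.smul φ⁻¹) (Subgroup.subset_pointwise_smul_iff.2 (by rwa [inv_inv]))

lemma isRootSubgroup_hyperplaneGroup [Finite F] (hn : 4 ≤ n) {f : Fin n → F} (hf : f ≠ 0) :
    IsRootSubgroup (hyperplaneGroup f) :=
  (isRootSubgroup_pointGroup hn hf).smul (dualAut n F)

/-! ### Tori -/

section Torus

variable {B : Type*} [CommRing B] [Algebra F B] (b : Basis (Fin n) F B)

variable (F B) in
/-- The units of norm `1` of an algebra. -/
noncomputable def normOneUnits : Subgroup Bˣ := (Units.map (Algebra.norm F (S := B))).ker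

lemma mem_normOneUnits {u : Bˣ} : u ∈ normOneUnits F B ↔ Algebra.norm F (u : B) = 1 := by
  rw [normOneUnits, MonoidHom.mem_ker, Units.ext_iff]
  rfl

/-- The action by multiplication of the units of norm `1` of an algebra, in a given basis. -/
noncomputable def torus : normOneUnits F B →* SL(n, F) where
  toFun u := ⟨Algebra.leftMulMatrix b (u.1 : B), by
    rw [← Algebra.norm_eq_matrix_det, mem_normOneUnits.1 u.2]⟩
  map_one' := Subtype.ext (map_one (Algebra.leftMulMatrix b))
  map_mul' u w := Subtype.ext (map_mul (Algebra.leftMulMatrix b) (u.1 : B) w.1)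

lemma torus_mulVec (u : normOneUnits F B) (z : B) :
    (torus b u).1 *ᵥ b.equivFun z = b.equivFun (u.1 * z) :=
  Algebra.leftMulMatrix_mulVec_repr b _ z

/-- The functional `w ↦ tr (z * w)` on the algebra with basis `b`, in coordinates. -/
noncomputable def traceVec : B →ₗ[F] Fin n → F :=
  LinearMap.pi fun i => (Algebra.traceForm F B).flip (b i)

lemma traceVec_dotProduct (z w : B) :
    traceVec b z ⬝ᵥ b.equivFun w = Algebra.trace F B (z * w) := by
  conv_rhs => rw [← b.sum_equivFun w, Finset.mul_sum, map_sum]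
  refine Finset.sum_congr rfl fun i _ => ?_
  rw [mul_smul_comm, map_smul, smul_eq_mul, mul_comm]
  rfl

lemma eq_of_dotProduct_equivFun {f g : Fin n → F}
    (h : ∀ w, f ⬝ᵥ b.equivFun w = g ⬝ᵥ b.equivFun w) : f = g :=
  dotProduct_eq _ _ (b.equivFun.surjective.forall.2 h)

lemma traceVec_vecMul_torus (u : normOneUnits F B) (z : B) :
    traceVec b z ᵥ* (torus b u).1 = traceVec b (u.1 * z) :=
  eq_of_dotProduct_equivFun b fun w => by
    rw [← dotProduct_mulVec, torus_mulVec, traceVec_dotProduct, traceVec_dotProduct, mul_left_comm,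
      mul_assoc]

lemma traceVec_injective (hB : (Algebra.traceForm F B).SeparatingLeft) :
    Function.Injective (traceVec b) := by
  refine (injective_iff_map_eq_zero _).2 fun z hz => hB z fun w => ?_
  rw [Algebra.traceForm_apply, ← traceVec_dotProduct b, hz, zero_dotProduct]

lemma traceVec_surjective (hB : (Algebra.traceForm F B).SeparatingLeft) :
    Function.Surjective (traceVec b) := by
  have := b.finiteDimensional_of_finite
  refine (LinearMap.injective_iff_surjective_of_finrank_eq_finrank ?_).1 (traceVec_injective b hB)
  rw [finrank_fin_fun, finrank_eq_card_basis b, Fintype.card_fin]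

lemma conj_torus_smul_pointGroup (u : normOneUnits F B) (z : B) :
    MulAut.conj (mk (torus b u)) • pointGroup (b.equivFun z) =
      pointGroup (b.equivFun (u.1 * z)) := by
  rw [conj_mk_smul_pointGroup, torus_mulVec]

lemma conj_torus_smul_hyperplaneGroup (u : normOneUnits F B) (z : B) :
    MulAut.conj (mk (torus b u)) • hyperplaneGroup (traceVec b z) =
      hyperplaneGroup (traceVec b ((u⁻¹).1 * z)) := by
  rw [conj_mk_smul_hyperplaneGroup, coe_transpose, mulVec_transpose, ← map_inv,
    traceVec_vecMul_torus]

lemma conj_torus_transv (u : normOneUnits F B) {z w : B} (h : traceVec b w ⬝ᵥ b.equivFun z = 0) :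
    MulAut.conj (mk (torus b u)) (mk (transv (b.equivFun z) (traceVec b w) h)) =
      mk (transv (b.equivFun (u.1 * z)) (traceVec b ((u⁻¹).1 * w)) (by
        rwa [traceVec_dotProduct, mul_mul_mul_comm, Subgroup.coe_inv, Units.inv_mul, one_mul,
          ← traceVec_dotProduct b])) := by
  rw [conj_mk, liftAut_mk, conjGL_transv]
  refine congrArg mk (Subtype.ext ?_)
  rw [transv_coe, transv_coe, ← torus_mulVec, ← traceVec_vecMul_torus, map_inv]
  rfl

lemma exists_mul_eq_smul_of_conj_torus_smul_eq (hn : 4 ≤ n)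
    (hB : (Algebra.traceForm F B).SeparatingLeft) {X : Subgroup (ProjSL n F)}
    (hX : IsRootSubgroup X) {u : normOneUnits F B} (h : MulAut.conj (mk (torus b u)) • X = X) :
    ∃ z ≠ 0, (X = pointGroup (b.equivFun z) ∨ X = hyperplaneGroup (traceVec b z)) ∧
      ∃ c : F, u.1 * z = c • z := by
  rcases hX.eq_pointGroup_or_eq_hyperplaneGroup hn with ⟨v, hv, rfl⟩ | ⟨f, hf, rfl⟩
  · obtain ⟨z, rfl⟩ := b.equivFun.surjective v
    rw [conj_torus_smul_pointGroup] at h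
    obtain ⟨c, hc⟩ := exists_smul_of_pointGroup_le (by omega) h.le
    rw [← map_smul] at hc
    exact ⟨z, by rintro rfl; simp at hv, .inl rfl, c, b.equivFun.injective hc⟩
  · obtain ⟨z, rfl⟩ := traceVec_surjective b hB f
    rw [conj_torus_smul_hyperplaneGroup] at h
    obtain ⟨c, hc⟩ := exists_smul_of_hyperplaneGroup_le (by omega) h.ge
    rw [← map_smul] at hc
    refine ⟨z, by rintro rfl; simp at hf, .inr rfl, c, ?_⟩
    conv_lhs => rw [traceVec_injective b hB hc]
    rw [mul_smul_comm, Subgroup.coe_inv, Units.mul_inv_cancel_left]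

end Torus

lemma geomSum_dvd_of_pow_eq_algebraMap [Finite F] {K : Type*} [Field K] [Algebra F K] [Finite K]
    {x : Kˣ} (hx : orderOf x = Nat.card Kˣ) {k : ℕ} {c : F}
    (h : (x : K) ^ k = algebraMap F K c) :
    ∑ i ∈ Finset.range (finrank F K), Nat.card F ^ i ∣ k := by
  have := Fintype.ofFinite F
  have hq : 1 < Nat.card F := Finite.one_lt_card
  have hc : c ≠ 0 := by
    rintro rfl
    exact (x ^ k).ne_zero (by rw [Units.val_pow_eq_pow_val, h, map_zero])
  have hpow : x ^ (k * (Nat.card F - 1)) = 1 := Units.ext <| by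
    rw [Units.val_pow_eq_pow_val, pow_mul, h, ← map_pow, Nat.card_eq_fintype_card,
      FiniteField.pow_card_sub_one_eq_one c hc, map_one, Units.val_one]
  have hdvd := orderOf_dvd_of_pow_eq_one hpow
  rw [hx, Nat.card_units, Module.natCard_eq_pow_finrank (K := F),
    ← geom_sum_mul_of_one_le hq.le] at hdvd
  exact Nat.dvd_of_mul_dvd_mul_right (Nat.sub_pos_of_lt hq) hdvd

lemma exists_finite_extension (F : Type*) [Field F] [Finite F] {n : ℕ} (hn : n ≠ 0) :
    ∃ (K : Type) (_ : Field K) (_ : Algebra F K) (_ : Finite K), finrank F K = n := by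
  have := Fintype.ofFinite F
  obtain ⟨p, _⟩ := CharP.exists F
  have : Fact p.Prime := ⟨CharP.char_is_prime F p⟩
  have : NeZero n := ⟨hn⟩
  exact ⟨FiniteField.Extension F p n, inferInstance, inferInstance, inferInstance,
    FiniteField.finrank_extension F p n⟩

/-- A generator of a Singer cycle, raised to the power `q - 1` to have norm `1`. -/
lemma exists_geomSum_dvd_of_conj_pow_smul_eq (hn : 4 ≤ n) (F : Type*) [Field F] [Finite F] :
    ∃ s : ProjSL n F, ∀ X : Subgroup (ProjSL n F), IsRootSubgroup X → ∀ k : ℕ,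
      MulAut.conj (s ^ k) • X = X →
      ∑ i ∈ Finset.range n, Nat.card F ^ i ∣ (Nat.card F - 1) * k := by
  have := Fintype.ofFinite F
  obtain ⟨K, _, _, _, hK⟩ := exists_finite_extension F (n := n) (by omega)
  have : FiniteDimensional F K := .of_finite
  obtain ⟨x, hx⟩ := IsCyclic.exists_ofOrder_eq_natCard (α := Kˣ)
  have hu : x ^ (Nat.card F - 1) ∈ normOneUnits F K := by
    rw [mem_normOneUnits, Units.val_pow_eq_pow_val, map_pow, Nat.card_eq_fintype_card,
      FiniteField.pow_card_sub_one_eq_one _ (Algebra.norm_ne_zero_iff.2 x.ne_zero)]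
  let b : Basis (Fin n) F K := finBasisOfFinrankEq F K hK
  refine ⟨mk (torus b ⟨_, hu⟩), fun X hX k hk => ?_⟩
  rw [← map_pow, ← map_pow] at hk
  obtain ⟨z, hz, -, c, hc⟩ := exists_mul_eq_smul_of_conj_torus_smul_eq b hn
    (traceForm_nondegenerate F K).1 hX hk
  rw [Algebra.smul_def] at hc
  rw [← hK]
  refine geomSum_dvd_of_pow_eq_algebraMap hx (c := c) ?_
  rw [pow_mul]
  simpa using mul_right_cancel₀ hz hc

lemma norm_prod_apply {S T : Type*} [CommRing S] [CommRing T] [Algebra F S] [Algebra F T]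
    [FiniteDimensional F S] [FiniteDimensional F T] (x : S × T) :
    Algebra.norm F x = Algebra.norm F x.1 * Algebra.norm F x.2 := by
  have : Algebra.lmul F (S × T) x = (Algebra.lmul F S x.1).prodMap (Algebra.lmul F T x.2) :=
    LinearMap.ext fun _ => rfl
  rw [Algebra.norm_apply, this, LinearMap.det_prodMap, ← Algebra.norm_apply, ← Algebra.norm_apply]

lemma separatingLeft_traceForm_prod {S T : Type*} [CommRing S] [CommRing T] [Algebra F S]
    [Algebra F T] [FiniteDimensional F S] [FiniteDimensional F T]
    (hS : (Algebra.traceForm F S).SeparatingLeft) (hT : (Algebra.traceForm F T).SeparatingLeft) :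
    (Algebra.traceForm F (S × T)).SeparatingLeft := by
  intro z hz
  refine Prod.ext (hS _ fun w => ?_) (hT _ fun w => ?_)
  · simpa [Algebra.traceForm_apply, Algebra.trace_prod_apply] using hz (w, 0)
  · simpa [Algebra.traceForm_apply, Algebra.trace_prod_apply] using hz (0, w)

/-- The subfield of multipliers of an additive subgroup of a finite field: the elements `k` with
`k * A ⊆ A`. -/
def multipliers {K : Type*} [Field K] [Finite K] (A : AddSubgroup K) : Subfield K :=
  let M : Submonoid K :=
    { carrier := {k | ∀ a ∈ A, k * a ∈ A}
      one_mem' := fun a ha => by rwa [one_mul]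
      mul_mem' := fun {k l} hk hl a ha => by rw [mul_assoc]; exact hk _ (hl a ha) }
  { M with
    zero_mem' := fun a _ => by rw [zero_mul]; exact A.zero_mem
    add_mem' := fun hk hl a ha => by rw [add_mul]; exact A.add_mem (hk a ha) (hl a ha)
    neg_mem' := fun hk a ha => by rw [neg_mul]; exact A.neg_mem (hk a ha)
    inv_mem' := fun k hk => by
      rcases eq_or_ne k 0 with rfl | hk0
      · rwa [_root_.inv_zero]
      · have := Fintype.ofFinite K
        have hinv : k * k ^ (Nat.card K - 2) = 1 := by
          rw [← pow_succ', ← FiniteField.pow_card_sub_one_eq_one k hk0, Fintype.card_eq_nat_card,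
            Nat.sub_add_eq _ 1 1, Nat.sub_add_cancel (Nat.sub_pos_of_lt Finite.one_lt_card)]
        rw [inv_eq_of_mul_eq_one_right hinv]
        exact pow_mem (S := M) hk _ }

lemma subfield_eq_top {K : Type*} [Field K] [Finite K] {E : Subfield K}
    (hE : Nat.card K < Nat.card E ^ 2) : E = ⊤ := by
  have hrank : finrank E K < 2 := by
    refine (Nat.pow_lt_pow_iff_right (Finite.one_lt_card (α := E))).1 ?_
    rwa [← Module.natCard_eq_pow_finrank]
  have hcard : Nat.card K ≤ Nat.card E := by
    rw [Module.natCard_eq_pow_finrank (K := E)]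
    exact (Nat.pow_le_pow_right Nat.card_pos (Nat.lt_succ_iff.1 hrank)).trans_eq (pow_one _)
  exact SetLike.coe_injective <| Set.eq_of_subset_of_ncard_le (Set.subset_univ _)
    (by rwa [Subfield.coe_top, Set.ncard_univ, ← Nat.card_coe_set_eq])

lemma addSubgroup_eq_top_of_unit_mul_mem {K : Type*} [Field K] [Finite K] {y : Kˣ}
    (hy : Nat.card K < orderOf y ^ 2) {A : AddSubgroup K} (hA : ∀ a ∈ A, y * a ∈ A) (h0 : A ≠ ⊥) :
    A = ⊤ := by
  have hcard : orderOf y ≤ Nat.card (multipliers A) := calc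
    orderOf y = orderOf (⟨y, hA⟩ : multipliers A) :=
      orderOf_units.symm.trans (orderOf_submonoid (H := (multipliers A).toSubmonoid) ⟨y, hA⟩)
    _ ≤ _ := orderOf_le_card
  have htop : multipliers A = ⊤ := subfield_eq_top (hy.trans_le (Nat.pow_le_pow_left hcard 2))
  obtain ⟨⟨a, ha⟩, ha0⟩ := A.ne_bot_iff_exists_ne_zero.1 h0
  have ha0 : a ≠ 0 := fun h => ha0 (Subtype.ext h)
  refine (AddSubgroup.eq_top_iff' A).2 fun k => ?_
  have hk : k * a⁻¹ ∈ multipliers A := htop ▸ Subfield.mem_top _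
  simpa [ha0] using hk a ha

lemma range_le_of_inf_ne_bot {G K : Type*} [Group G] [Field K] [Finite K]
    (ι : Multiplicative K →* G) {g : G} {y : Kˣ} (hy : Nat.card K < orderOf y ^ 2)
    (hconj : ∀ k : K, MulAut.conj g (ι (.ofAdd k)) = ι (.ofAdd (y * k))) {L : Subgroup G}
    (hg : g ∈ L) (h : ι.range ⊓ L ≠ ⊥) : ι.range ≤ L := by
  let A : AddSubgroup K := Subgroup.toAddSubgroup' (L.comap ι)
  have hmem {k : K} : k ∈ A ↔ ι (.ofAdd k) ∈ L := Iff.rfl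
  have hA : A = ⊤ := by
    refine addSubgroup_eq_top_of_unit_mul_mem hy (fun a ha => ?_) fun hbot => h (eq_bot_iff.2 ?_)
    · rw [hmem, ← hconj, MulAut.conj_apply]
      exact mul_mem (mul_mem hg ha) (inv_mem hg)
    · rintro _ ⟨⟨k, rfl⟩, hk⟩
      have : k.toAdd ∈ A := hk
      rw [hbot, AddSubgroup.mem_bot] at this
      rw [Subgroup.mem_bot, ← ofAdd_toAdd k, this, ofAdd_zero, map_one]
  rintro _ ⟨k, rfl⟩
  exact hmem.1 (hA ▸ AddSubgroup.mem_top k.toAdd)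

/-! ### Pivots -/

lemma card_lt_orderOf_mul_sq [Finite F] {K : Type*} [Field K] [Algebra F K] [Finite K]
    (hK : 2 ≤ finrank F K) {x : Kˣ} (hx : orderOf x = Nat.card Kˣ) (c : Fˣ) :
    Nat.card K < orderOf (x * Units.map (algebraMap F K) c) ^ 2 := by
  have hq : 1 < Nat.card F := Finite.one_lt_card
  set y := x * Units.map (algebraMap F K : F →* K) c
  obtain ⟨m, hm⟩ := Nat.exists_eq_add_of_le' hK
  have hdvd : ∑ i ∈ Finset.range (finrank F K), Nat.card F ^ i ∣ orderOf y := by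
    refine geomSum_dvd_of_pow_eq_algebraMap hx (c := ((c ^ orderOf y)⁻¹ : Fˣ)) ?_
    have hy : x ^ orderOf y * Units.map (algebraMap F K) c ^ orderOf y = 1 := by
      rw [← mul_pow, pow_orderOf_eq_one]
    rw [← map_pow] at hy
    rw [← Units.val_pow_eq_pow_val, eq_inv_of_mul_eq_one_left hy, ← map_inv]
    rfl
  have hlt : Nat.card F ^ (m + 1) < orderOf y := by
    refine lt_of_lt_of_le ?_ (Nat.le_of_dvd (orderOf_pos y) hdvd)
    rw [hm, Finset.sum_range_succ]
    exact Nat.lt_add_of_pos_left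
      (Finset.sum_pos (fun i _ => pow_pos (by omega) i) Finset.nonempty_range_add_one)
  calc Nat.card K = Nat.card F ^ (m + 2) := by rw [Module.natCard_eq_pow_finrank (K := F), hm]
    _ ≤ (Nat.card F ^ (m + 1)) ^ 2 := by
      rw [← pow_mul]
      exact Nat.pow_le_pow_right hq.le (by omega)
    _ < orderOf y ^ 2 := Nat.pow_lt_pow_left hlt two_ne_zero

/-- A family of transvections with centre `v`, parametrised linearly by their functionals. -/
def pointHom {W : Type*} [AddCommGroup W] [Module F W] (v : Fin n → F) (ℓ : W →ₗ[F] Fin n → F)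
    (h : ∀ w, ℓ w ⬝ᵥ v = 0) : Multiplicative W →* ProjSL n F :=
  .mk' (fun w => mk (transv v (ℓ w.toAdd) (h _))) fun w w' => by
    rw [← map_mul, transv_mul_transv_left]
    simp only [toAdd_mul, map_add]

/-- A family of transvections with functional `f`, parametrised linearly by their centres. -/
def hyperplaneHom {W : Type*} [AddCommGroup W] [Module F W] (ℓ : W →ₗ[F] Fin n → F)
    (f : Fin n → F) (h : ∀ w, f ⬝ᵥ ℓ w = 0) : Multiplicative W →* ProjSL n F :=
  .mk' (fun w => mk (transv (ℓ w.toAdd) f (h _))) fun w w' => by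
    rw [← map_mul, transv_mul_transv_right]
    simp only [toAdd_mul, map_add]

/-- `b` is a pivot for the point `v` and the hyperplane `f` if every subgroup that contains `b` and
meets one of the two corresponding root subgroups contains that root subgroup, and if every other
root subgroup has an orbit under `b` of length divisible by `1 + q + ⋯ + q ^ (n - 2)`, where `q` is
the order of the field. -/
structure IsPivot (b : ProjSL n F) (v f : Fin n → F) : Prop where
  dotProduct_ne_zero : f ⬝ᵥ v ≠ 0
  eq_or_eq_or_dvd : ∀ X : Subgroup (ProjSL n F), IsRootSubgroup X → ∀ k : ℕ,
    MulAut.conj (b ^ k) • X = X → X = pointGroup v ∨ X = hyperplaneGroup f ∨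
      ∑ i ∈ Finset.range (n - 1), Nat.card F ^ i ∣ k
  pointGroup_le : ∀ L : Subgroup (ProjSL n F), b ∈ L → pointGroup v ⊓ L ≠ ⊥ → pointGroup v ≤ L
  hyperplaneGroup_le : ∀ L : Subgroup (ProjSL n F), b ∈ L → hyperplaneGroup f ⊓ L ≠ ⊥ →
    hyperplaneGroup f ≤ L

section Pivot

variable {K : Type*} [Field K] [Algebra F K]

lemma traceVec_dotProduct_one_zero [FiniteDimensional F K] (b : Basis (Fin n) F (F × K))
    (z : F × K) : traceVec b z ⬝ᵥ b.equivFun (1, 0) = z.1 := by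
  rw [traceVec_dotProduct, Algebra.trace_prod_apply, Algebra.trace_self_apply, Prod.mul_def]
  simp only [mul_one, mul_zero, map_zero, add_zero]

lemma traceVec_one_zero_dotProduct [FiniteDimensional F K] (b : Basis (Fin n) F (F × K))
    (z : F × K) : traceVec b (1, 0) ⬝ᵥ b.equivFun z = z.1 := by
  rw [traceVec_dotProduct, mul_comm, ← traceVec_dotProduct b, traceVec_dotProduct_one_zero]

variable (F) in
/-- The unit `(N(x)⁻¹, x)` of norm `1` of `F × K`. -/
noncomputable def pivotUnit [FiniteDimensional F K] (x : Kˣ) : normOneUnits F (F × K) :=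
  ⟨MulEquiv.prodUnits.symm ((Units.map (Algebra.norm F) x)⁻¹, x), by
    rw [mem_normOneUnits, norm_prod_apply, Algebra.norm_self]
    exact Units.inv_mul _⟩

lemma pivotUnit_mul [FiniteDimensional F K] (x : Kˣ) (z : F × K) :
    ((pivotUnit F x).1 : F × K) * z = ((Algebra.norm F (x : K))⁻¹ * z.1, x * z.2) :=
  Prod.ext (congrArg (· * z.1) (Units.val_inv_eq_inv_val (Units.map (Algebra.norm F) x))) rfl

lemma pivotUnit_inv_mul [FiniteDimensional F K] (x : Kˣ) (z : F × K) :
    (((pivotUnit F x)⁻¹).1 : F × K) * z = (Algebra.norm F (x : K) * z.1, (x : K)⁻¹ * z.2) :=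
  Prod.ext rfl (congrArg (· * z.2) (Units.val_inv_eq_inv_val x))

lemma eq_or_eq_or_geomSum_dvd [Finite F] [Finite K] (hn : 4 ≤ n) (b : Basis (Fin n) F (F × K))
    {x : Kˣ} (hx : orderOf x = Nat.card Kˣ) {X : Subgroup (ProjSL n F)} (hX : IsRootSubgroup X)
    {k : ℕ} (hk : MulAut.conj (mk (torus b (pivotUnit F x)) ^ k) • X = X) :
    X = pointGroup (b.equivFun (1, 0)) ∨ X = hyperplaneGroup (traceVec b (1, 0)) ∨
      ∑ i ∈ Finset.range (finrank F K), Nat.card F ^ i ∣ k := by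
  rw [← map_pow, ← map_pow] at hk
  have hB := separatingLeft_traceForm_prod (traceForm_nondegenerate F F).1
    (traceForm_nondegenerate F K).1
  obtain ⟨⟨a, z⟩, hz, hX', c, hc⟩ := exists_mul_eq_smul_of_conj_torus_smul_eq b hn hB hX hk
  have hc₂ : (x : K) ^ k * z = c • z := congrArg Prod.snd hc
  rcases eq_or_ne z 0 with rfl | hz0
  · have ha : ((a, 0) : F × K) = a • (1, 0) := by
      rw [Prod.smul_mk, smul_zero, smul_eq_mul, mul_one]
    rcases hX' with rfl | rfl
    · refine .inl (hX.eq_of_le (isTransvectionSubgroup_pointGroup _) (pointGroup_le_pointGroup ?_))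
      exact ⟨a, by rw [ha, map_smul]⟩
    · refine .inr (.inl (hX.eq_of_le (isTransvectionSubgroup_hyperplaneGroup _)
        (hyperplaneGroup_le_hyperplaneGroup ?_)))
      exact ⟨a, by rw [ha, map_smul]⟩
  · rw [Algebra.smul_def] at hc₂
    exact .inr (.inr (geomSum_dvd_of_pow_eq_algebraMap hx (mul_right_cancel₀ hz0 hc₂)))

lemma pointGroup_le_of_inf_ne_bot [Finite F] [Finite K] (hK : 2 ≤ finrank F K)
    (b : Basis (Fin n) F (F × K)) {x : Kˣ} (hx : orderOf x = Nat.card Kˣ)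
    {L : Subgroup (ProjSL n F)} (hL : mk (torus b (pivotUnit F x)) ∈ L)
    (h : pointGroup (b.equivFun (1, 0)) ⊓ L ≠ ⊥) : pointGroup (b.equivFun (1, 0)) ≤ L := by
  have hB := separatingLeft_traceForm_prod (traceForm_nondegenerate F F).1
    (traceForm_nondegenerate F K).1
  have h0 (k : K) : (traceVec b ∘ₗ LinearMap.inr F F K) k ⬝ᵥ b.equivFun (1, 0) = 0 :=
    traceVec_dotProduct_one_zero b (0, k)
  let ι := pointHom _ _ h0
  have hι : ι.range = pointGroup (b.equivFun (1, 0)) := by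
    ext t
    rw [mem_pointGroup]
    constructor
    · rintro ⟨k, rfl⟩
      exact ⟨_, _, rfl⟩
    · rintro ⟨f, hf, rfl⟩
      obtain ⟨⟨a, k⟩, rfl⟩ := traceVec_surjective b hB f
      obtain rfl : a = 0 := (traceVec_dotProduct_one_zero b _).symm.trans hf
      exact ⟨.ofAdd k, rfl⟩
  rw [← hι] at h ⊢
  refine range_le_of_inf_ne_bot ι (y := (x * Units.map (algebraMap F K)
    (Units.map (Algebra.norm F) x))⁻¹) ?_ (fun k => ?_) hL h
  · rw [orderOf_inv]
    exact card_lt_orderOf_mul_sq hK hx _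
  · refine (conj_torus_transv b _ _).trans (congrArg mk (Subtype.ext ?_))
    have hu : ((pivotUnit F x).1 : F × K) * (1, 0) = (Algebra.norm F (x : K))⁻¹ • (1, 0) := by
      rw [pivotUnit_mul, Prod.smul_mk, mul_zero, smul_zero, smul_eq_mul]
    rw [transv_coe, transv_coe, hu, map_smul, smul_vecMulVec, ← vecMulVec_smul, ← map_smul,
      pivotUnit_inv_mul]
    refine congrArg (fun z => 1 + vecMulVec (b.equivFun (1, 0)) (traceVec b z)) (Prod.ext ?_ ?_)
    · simp
    · simp [Algebra.smul_def, mul_assoc, mul_left_comm]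

lemma hyperplaneGroup_le_of_inf_ne_bot [Finite F] [Finite K] (hK : 2 ≤ finrank F K)
    (b : Basis (Fin n) F (F × K)) {x : Kˣ} (hx : orderOf x = Nat.card Kˣ)
    {L : Subgroup (ProjSL n F)} (hL : mk (torus b (pivotUnit F x)) ∈ L)
    (h : hyperplaneGroup (traceVec b (1, 0)) ⊓ L ≠ ⊥) :
    hyperplaneGroup (traceVec b (1, 0)) ≤ L := by
  have h0 (k : K) : traceVec b (1, 0) ⬝ᵥ (b.equivFun.toLinearMap ∘ₗ LinearMap.inr F F K) k = 0 :=
    traceVec_one_zero_dotProduct b (0, k)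
  let ι := hyperplaneHom _ _ h0
  have hι : ι.range = hyperplaneGroup (traceVec b (1, 0)) := by
    ext t
    rw [mem_hyperplaneGroup]
    constructor
    · rintro ⟨k, rfl⟩
      exact ⟨_, _, rfl⟩
    · rintro ⟨v, hv, rfl⟩
      obtain ⟨⟨a, k⟩, rfl⟩ := b.equivFun.surjective v
      obtain rfl : a = 0 := (traceVec_one_zero_dotProduct b _).symm.trans hv
      exact ⟨.ofAdd k, rfl⟩
  rw [← hι] at h ⊢
  refine range_le_of_inf_ne_bot ι (card_lt_orderOf_mul_sq hK hx (Units.map (Algebra.norm F) x))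
    (fun k => ?_) hL h
  refine (conj_torus_transv b _ _).trans (congrArg mk (Subtype.ext ?_))
  have hu : (((pivotUnit F x)⁻¹).1 : F × K) * (1, 0) = Algebra.norm F (x : K) • (1, 0) := by
    rw [pivotUnit_inv_mul, Prod.smul_mk, mul_zero, smul_zero, smul_eq_mul]
  rw [transv_coe, transv_coe, hu, map_smul, vecMulVec_smul, ← smul_vecMulVec, ← map_smul,
    pivotUnit_mul]
  refine congrArg (fun z => 1 + vecMulVec (b.equivFun z) (traceVec b (1, 0))) (Prod.ext ?_ ?_)
  · simp
  · simp [Algebra.smul_def, mul_assoc, mul_left_comm]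

end Pivot

lemma exists_isPivot (hn : 4 ≤ n) (F : Type*) [Field F] [Finite F] :
    ∃ (b : ProjSL n F) (v f : Fin n → F), IsPivot b v f := by
  obtain ⟨K, _, _, _, hK⟩ := exists_finite_extension F (n := n - 1) (by omega)
  have : FiniteDimensional F K := .of_finite
  obtain ⟨x, hx⟩ := IsCyclic.exists_ofOrder_eq_natCard (α := Kˣ)
  let b : Basis (Fin n) F (F × K) := finBasisOfFinrankEq F _ (by
    rw [finrank_prod, finrank_self, hK]
    omega)
  refine ⟨mk (torus b (pivotUnit F x)), b.equivFun (1, 0), traceVec b (1, 0),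
    ⟨?_, fun X hX k hk => ?_, fun L hL h => ?_, fun L hL h => ?_⟩⟩
  · exact (traceVec_dotProduct_one_zero b _).trans_ne one_ne_zero
  · exact hK ▸ eq_or_eq_or_geomSum_dvd hn b hx hX hk
  · exact pointGroup_le_of_inf_ne_bot (by omega) b hx hL h
  · exact hyperplaneGroup_le_of_inf_ne_bot (by omega) b hx hL h

/-! ### Counting root subgroups meeting a subgroup -/

lemma dvd_mul_natCard {G α : Type*} [Group G] [MulAction G α] [Finite α] (g : G) {a N : ℕ}
    (h : ∀ (x : α) (k : ℕ), g ^ k • x = x → N ∣ a * k) : N ∣ a * Nat.card α := by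
  have := Fintype.ofFinite (MulAction.orbitRel.Quotient (Subgroup.zpowers g) α)
  rw [Nat.card_congr (MulAction.selfEquivSigmaOrbits (Subgroup.zpowers g) α), Nat.card_sigma,
    Finset.mul_sum]
  refine Finset.dvd_sum fun ω _ => h ω.out _ ?_
  have := Fintype.ofFinite (MulAction.orbit (Subgroup.zpowers g) ω.out)
  rw [MulAction.pow_smul_eq_iff_minimalPeriod_dvd, Nat.card_eq_fintype_card,
    MulAction.minimalPeriod_eq_card]

lemma dvd_mul_ncard {G α : Type*} [Group G] [MulAction G α] {g : G} {C : Set α} (hC : C.Finite)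
    (hg : g • C = C) {a N : ℕ} (h : ∀ x ∈ C, ∀ k : ℕ, g ^ k • x = x → N ∣ a * k) :
    N ∣ a * C.ncard := by
  have := hC.to_subtype
  have hmem (x : α) : MulAction.toPerm g x ∈ C ↔ x ∈ C := by
    conv_lhs => rw [← hg]
    exact Set.smul_mem_smul_set_iff
  refine dvd_mul_natCard ((MulAction.toPerm g).subtypePerm hmem) fun x k hk => ?_
  refine h x x.2 k ?_
  rw [Equiv.Perm.subtypePerm_pow] at hk
  rw [← MulAction.toPerm_apply, ← MulAction.toPermHom_apply, map_pow]
  exact congrArg Subtype.val hk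

lemma eq_zero_of_geomSum_dvd {n q c : ℕ} (hn : 3 ≤ n) (hq : 1 < q)
    (hc : c ≤ ∑ i ∈ Finset.range n, q ^ i) (h₁ : ∑ i ∈ Finset.range (n - 1), q ^ i ∣ c)
    (h₂ : ∑ i ∈ Finset.range n, q ^ i ∣ (q - 1) * c) : c = 0 := by
  obtain ⟨m, rfl⟩ := Nat.exists_eq_add_of_le' hn
  change ∑ i ∈ Finset.range (m + 2), q ^ i ∣ c at h₁
  set N := ∑ i ∈ Finset.range (m + 3), q ^ i with hN
  set M := ∑ i ∈ Finset.range (m + 2), q ^ i with hM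
  have hco : N.Coprime M := by
    rw [hN, geom_sum_succ, ← hM]
    simp
  have hNpos : 0 < N := by rw [hN, geom_sum_succ]; exact Nat.succ_pos _
  have hqM : q ≤ M := by
    rw [hM, geom_sum_succ, geom_sum_succ]
    exact (Nat.le_mul_of_pos_right q (Nat.succ_pos _)).trans (Nat.le_succ _)
  have hdvd := hco.mul_dvd_of_dvd_of_dvd h₂ (h₁.mul_left (q - 1))
  by_contra hc0
  have hle := Nat.le_of_dvd (Nat.mul_pos (by omega) (Nat.pos_of_ne_zero hc0)) hdvd
  refine absurd (hle.trans (Nat.mul_le_mul_left _ hc)) (not_le.2 ?_)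
  rw [mul_comm]
  exact Nat.mul_lt_mul_of_pos_left (by omega) hNpos

variable (n F) in
/-- The root subgroups attached to the points of projective space. -/
def pointGroups : Set (Subgroup (ProjSL n F)) := {X | ∃ v ≠ 0, X = pointGroup v}

variable (n F) in
/-- The root subgroups attached to the hyperplanes of projective space. -/
def hyperplaneGroups : Set (Subgroup (ProjSL n F)) := {X | ∃ f ≠ 0, X = hyperplaneGroup f}

lemma ncard_pointGroups_le [Finite F] :
    (pointGroups n F).ncard ≤ ∑ i ∈ Finset.range n, Nat.card F ^ i := by
  have hsub : pointGroups n F ⊆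
      Set.range fun p : Projectivization F (Fin n → F) => pointGroup p.rep := by
    rintro _ ⟨v, hv, rfl⟩
    obtain ⟨a, ha⟩ := Projectivization.exists_smul_eq_mk_rep F v hv
    refine ⟨.mk F v hv, le_antisymm ?_ ?_⟩
    · exact pointGroup_le_pointGroup ⟨a, ha.symm⟩
    · exact pointGroup_le_pointGroup ⟨(a⁻¹ : Fˣ), (inv_smul_eq_iff.2 ha.symm).symm⟩
  calc (pointGroups n F).ncard ≤ _ := Set.ncard_le_ncard hsub
    _ ≤ Nat.card (Projectivization F (Fin n → F)) := Finite.card_range_le _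
    _ = _ := Projectivization.card_of_finrank F _ (finrank_fin_fun F)

lemma ncard_hyperplaneGroups_le [Finite F] :
    (hyperplaneGroups n F).ncard ≤ ∑ i ∈ Finset.range n, Nat.card F ^ i := by
  have hsub : hyperplaneGroups n F ⊆ (dualAut n F • ·) '' pointGroups n F := by
    rintro _ ⟨f, hf, rfl⟩
    exact ⟨_, ⟨f, hf, rfl⟩, rfl⟩
  exact (Set.ncard_le_ncard hsub).trans ((Set.ncard_image_le).trans ncard_pointGroups_le)

lemma conj_smul_setOf_inf_ne_bot {G : Type*} [Group G] {𝒮 : Set (Subgroup G)}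
    (h𝒮 : ∀ g : G, ∀ X ∈ 𝒮, MulAut.conj g • X ∈ 𝒮) {L : Subgroup G} {g : G} (hg : g ∈ L) :
    MulAut.conj g • {X ∈ 𝒮 | X ⊓ L ≠ ⊥} = {X ∈ 𝒮 | X ⊓ L ≠ ⊥} := by
  have hmaps {g : G} (hg : g ∈ L) :
      MulAut.conj g • {X ∈ 𝒮 | X ⊓ L ≠ ⊥} ⊆ {X ∈ 𝒮 | X ⊓ L ≠ ⊥} := by
    rintro _ ⟨X, ⟨hX, hXL⟩, rfl⟩
    refine ⟨h𝒮 g X hX, ?_⟩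
    rw [← Subgroup.conj_smul_eq_self_of_mem hg, ← Subgroup.smul_inf,
      ← Subgroup.smul_bot (MulAut.conj g)]
    exact (MulAction.injective _).ne hXL
  refine (hmaps hg).antisymm (Set.subset_smul_set_iff.2 ?_)
  rw [← map_inv]
  exact hmaps (inv_mem hg)

/-- Orbit counting: the number of members of `𝒮` meeting `L` is a multiple of the orbit lengths of
both `b` and `s`, which is too much. -/
lemma IsPivot.pointGroup_or_hyperplaneGroup_le [Finite F] (hn : 4 ≤ n) {b : ProjSL n F}
    {v f : Fin n → F} (hb : IsPivot b v f) {s : ProjSL n F}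
    (hs : ∀ X : Subgroup (ProjSL n F), IsRootSubgroup X → ∀ k : ℕ, MulAut.conj (s ^ k) • X = X →
      ∑ i ∈ Finset.range n, Nat.card F ^ i ∣ (Nat.card F - 1) * k)
    {𝒮 : Set (Subgroup (ProjSL n F))} (hroot : ∀ X ∈ 𝒮, IsRootSubgroup X)
    (hconj : ∀ g : ProjSL n F, ∀ X ∈ 𝒮, MulAut.conj g • X ∈ 𝒮)
    (hcard : 𝒮.ncard ≤ ∑ i ∈ Finset.range n, Nat.card F ^ i)
    {L : Subgroup (ProjSL n F)} (hbL : b ∈ L) {ψ : MulAut (ProjSL n F)} (hsL : ψ s ∈ L)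
    (hX : ∃ X ∈ 𝒮, X ⊓ L ≠ ⊥) :
    (pointGroup v ∈ 𝒮 ∧ pointGroup v ≤ L) ∨ (hyperplaneGroup f ∈ 𝒮 ∧ hyperplaneGroup f ≤ L) := by
  by_contra! hnot
  let C : Set (Subgroup (ProjSL n F)) := {X ∈ 𝒮 | X ⊓ L ≠ ⊥}
  have hCb : ∑ i ∈ Finset.range (n - 1), Nat.card F ^ i ∣ C.ncard := by
    rw [← one_mul C.ncard]
    refine dvd_mul_ncard (Set.toFinite _) (conj_smul_setOf_inf_ne_bot hconj hbL)
      fun X hXC k hk => ?_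
    rw [← map_pow] at hk
    rw [one_mul]
    rcases hb.eq_or_eq_or_dvd X (hroot X hXC.1) k hk with rfl | rfl | h
    · exact (hnot.1 hXC.1 (hb.pointGroup_le L hbL hXC.2)).elim
    · exact (hnot.2 hXC.1 (hb.hyperplaneGroup_le L hbL hXC.2)).elim
    · exact h
  have hCs : ∑ i ∈ Finset.range n, Nat.card F ^ i ∣ (Nat.card F - 1) * C.ncard := by
    refine dvd_mul_ncard (Set.toFinite _) (conj_smul_setOf_inf_ne_bot hconj hsL)
      fun X hXC k hk => ?_
    refine hs (ψ⁻¹ • X) (IsRootSubgroup.smul _ (hroot X hXC.1)) k ?_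
    have h := conj_apply_smul ψ (s ^ k) (ψ⁻¹ • X)
    rw [smul_inv_smul, map_pow, map_pow, hk] at h
    exact (inv_smul_eq_iff.2 h).symm
  have hC0 := eq_zero_of_geomSum_dvd (by omega) Finite.one_lt_card
    ((Set.ncard_le_ncard fun X hX => hX.1).trans hcard) hCb hCs
  obtain ⟨X, hX⟩ := hX
  exact ((Set.ncard_eq_zero (Set.toFinite C)).1 hC0).subset hX

/-! ### Generation by transvections -/

lemma transvection_mulVec {i j : Fin n} (hij : i ≠ j) (a : F) (x : Fin n → F) :
    (SpecialLinearGroup.transvection hij a).1 *ᵥ x = x + (a * x j) • Pi.single i 1 := by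
  rw [transvection_eq_transv, transv_coe, add_mulVec, one_mulVec, vecMulVec_mulVec_eq,
    single_dotProduct]

lemma diag2n_eq_prod_transvection {i j : Fin n} (hij : i ≠ j) {c : F} (hc : c ≠ 0) :
    SpecialLinearGroup.diag2n hij c hc =
      SpecialLinearGroup.transvection hij c * (SpecialLinearGroup.transvection hij.symm (-c⁻¹) *
        (SpecialLinearGroup.transvection hij c * (SpecialLinearGroup.transvection hij (-1) *
          (SpecialLinearGroup.transvection hij.symm 1 *
            SpecialLinearGroup.transvection hij (-1))))) := by
  refine Subtype.ext (Matrix.mulVec_injective (funext fun x => ?_))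
  simp only [coe_mul, ← mulVec_mulVec, transvection_mulVec, SpecialLinearGroup.diag2n_coe]
  ext k
  rw [mulVec_diagonal]
  rcases eq_or_ne k i with rfl | hi
  · simp only [hij, hij.symm, ↓reduceIte, neg_mul, one_mul, neg_smul, Pi.add_apply,
      Pi.neg_apply, Pi.smul_apply, Pi.single_eq_same, smul_eq_mul, mul_one, ne_eq,
      not_false_eq_true, Pi.single_eq_of_ne, mul_zero, neg_zero, add_zero,
      add_neg_cancel_comm_assoc, add_neg_cancel_comm]
    field_simp
    ring
  rcases eq_or_ne k j with rfl | hj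
  · simp only [hij, hij.symm, ↓reduceIte, neg_mul, one_mul, neg_smul, Pi.add_apply,
      Pi.neg_apply, Pi.smul_apply, Pi.single_eq_same, smul_eq_mul, mul_one, ne_eq,
      not_false_eq_true, Pi.single_eq_of_ne, mul_zero, neg_zero, add_zero,
      add_neg_cancel_comm_assoc, add_neg_cancel_comm]
    field_simp
    ring
  · simp [hi, hj]

lemma eq_top_of_forall_transv_mem (hn : 2 ≤ n) {L : Subgroup (ProjSL n F)}
    (hL : ∀ (v f : Fin n → F) (h : f ⬝ᵥ v = 0), mk (transv v f h) ∈ L) : L = ⊤ := by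
  have := Fin.nontrivial_iff_two_le.2 hn
  have htransvection {i j : Fin n} (hij : i ≠ j) (a : F) :
      SpecialLinearGroup.transvection hij a ∈ L.comap mk := by
    rw [transvection_eq_transv]
    exact hL _ _ _
  refine (Subgroup.eq_top_iff' L).2 (mk_surjective.forall.2 fun g => ?_)
  refine SpecialLinearGroup.diagonal_transvection_induction' (· ∈ L.comap mk) g
    (fun i j hij c hc => ?_) (fun i j => htransvection) fun A B => mul_mem
  rw [diag2n_eq_prod_transvection]
  exact mul_mem (htransvection _ _) <| mul_mem (htransvection _ _) <| mul_mem (htransvection _ _) <|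
    mul_mem (htransvection _ _) <| mul_mem (htransvection _ _) (htransvection _ _)

lemma pointGroup_le_of_hyperplaneGroup_le {L : Subgroup (ProjSL n F)} {v f : Fin n → F}
    (hv : pointGroup v ≤ L) (hf : hyperplaneGroup f ≤ L) (hfv : f ⬝ᵥ v ≠ 0) {w : Fin n → F}
    (hfw : f ⬝ᵥ w ≠ 0) : pointGroup w ≤ L := by
  set c := (f ⬝ᵥ v) / (f ⬝ᵥ w) with hc
  have hu : f ⬝ᵥ ((f ⬝ᵥ v)⁻¹ • (c • w - v)) = 0 := by
    rw [dotProduct_smul, dotProduct_sub, dotProduct_smul, hc, smul_eq_mul, smul_eq_mul,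
      div_mul_cancel₀ _ hfw, sub_self, mul_zero]
  have hmap : (transv _ f hu).1 *ᵥ v = c • w := by
    rw [transv_coe, add_mulVec, one_mulVec, vecMulVec_mulVec_eq, smul_inv_smul₀ hfv,
      add_sub_cancel]
  have hmem : mk (transv _ f hu) ∈ L := hf (mem_hyperplaneGroup.2 ⟨_, hu, rfl⟩)
  calc pointGroup w ≤ pointGroup (c • w) :=
        pointGroup_le_pointGroup ⟨c⁻¹, (inv_smul_smul₀ (div_ne_zero hfv hfw) w).symm⟩
    _ = MulAut.conj (mk (transv _ f hu)) • pointGroup v := by rw [conj_mk_smul_pointGroup, hmap]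
    _ ≤ MulAut.conj (mk (transv _ f hu)) • L := Subgroup.pointwise_smul_le_pointwise_smul_iff.2 hv
    _ = L := Subgroup.conj_smul_eq_self_of_mem hmem

lemma eq_top_of_pointGroup_le_of_hyperplaneGroup_le (hn : 2 ≤ n) {L : Subgroup (ProjSL n F)}
    {v f : Fin n → F} (hv : pointGroup v ≤ L) (hf : hyperplaneGroup f ≤ L) (hfv : f ⬝ᵥ v ≠ 0) :
    L = ⊤ := by
  refine eq_top_of_forall_transv_mem hn fun w g h => ?_
  have hmem {u : Fin n → F} (hfu : f ⬝ᵥ u ≠ 0) (hu : g ⬝ᵥ u = 0) : mk (transv u g hu) ∈ L :=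
    pointGroup_le_of_hyperplaneGroup_le hv hf hfv hfu ⟨_, _, rfl⟩
  by_cases hfw : f ⬝ᵥ w = 0
  · by_cases hg : ∃ c : F, g = c • f
    · exact hf (hyperplaneGroup_le_hyperplaneGroup hg (mem_hyperplaneGroup.2 ⟨w, h, rfl⟩))
    · obtain ⟨u, hfu, hgu⟩ := exists_dotProduct_eq_one_and_eq_zero (v := f) (w := g) fun hfg =>
        hg (exists_smul_symm (by rintro rfl; exact hfv (zero_dotProduct v)) hfg)
      rw [dotProduct_comm] at hfu hgu
      have hadd := transv_mul_transv_right (v := w + u) (w := -u) (f := g)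
        (by rw [dotProduct_add, h, hgu, add_zero]) (by rw [dotProduct_neg, hgu, neg_zero])
      simp only [add_neg_cancel_right] at hadd
      rw [← hadd, map_mul]
      refine mul_mem (hmem ?_ _) (hmem ?_ _)
      · rw [dotProduct_add, hfw, hfu, zero_add]
        exact one_ne_zero
      · rw [dotProduct_neg, hfu]
        exact neg_ne_zero.2 one_ne_zero
  · exact hmem hfw h

/-! ### The lower bound -/

lemma mulVec_ne_zero (g : SL(n, F)) {v : Fin n → F} (hv : v ≠ 0) : g.1 *ᵥ v ≠ 0 := fun h =>
  one_ne_zero (g.2.symm.trans (exists_mulVec_eq_zero_iff.1 ⟨v, hv, h⟩))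

lemma conj_smul_mem_pointGroups (x : ProjSL n F) {X : Subgroup (ProjSL n F)}
    (hX : X ∈ pointGroups n F) : MulAut.conj x • X ∈ pointGroups n F := by
  obtain ⟨g, rfl⟩ := mk_surjective x
  obtain ⟨v, hv, rfl⟩ := hX
  exact ⟨_, mulVec_ne_zero g hv, conj_mk_smul_pointGroup g v⟩

lemma conj_smul_mem_hyperplaneGroups (x : ProjSL n F) {X : Subgroup (ProjSL n F)}
    (hX : X ∈ hyperplaneGroups n F) : MulAut.conj x • X ∈ hyperplaneGroups n F := by
  obtain ⟨g, rfl⟩ := mk_surjective x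
  obtain ⟨f, hf, rfl⟩ := hX
  exact ⟨_, mulVec_ne_zero _ hf, conj_mk_smul_hyperplaneGroup g f⟩

/-- A nontrivial transvection conjugate into `L` gives a point and a hyperplane whose root subgroups
meet `L`; orbit counting then puts both root subgroups of the pivot inside `L`. -/
lemma IsPivot.eq_top [Finite F] (hn : 4 ≤ n) {b : ProjSL n F} {v f : Fin n → F}
    (hb : IsPivot b v f) {L : Subgroup (ProjSL n F)} (hbL : b ∈ L)
    (hL : ∀ g, ∃ φ : MulAut (ProjSL n F), φ g ∈ L) : L = ⊤ := by
  obtain ⟨s, hs⟩ := exists_geomSum_dvd_of_conj_pow_smul_eq hn F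
  obtain ⟨ψ, hψ⟩ := hL s
  have hv0 : v ≠ 0 := by
    rintro rfl
    exact hb.dotProduct_ne_zero (dotProduct_zero f)
  obtain ⟨t, htv, ht1⟩ := (pointGroup v).bot_or_exists_ne_one.resolve_left fun h =>
    not_pointGroup_le_hyperplaneGroup (by omega) (g := f) hv0 (h.le.trans bot_le)
  obtain ⟨χ, hχ⟩ := hL t
  obtain ⟨w, g, hgw, hχt, hw, hg⟩ :=
    ((isTransvectionSubgroup_pointGroup v t htv).apply χ).exists_ne_zero (by simpa using ht1)
  have hmeet {X : Subgroup (ProjSL n F)} (hX : χ t ∈ X) : X ⊓ L ≠ ⊥ := fun h =>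
    ht1 (by simpa [h] using Subgroup.mem_inf.2 ⟨hX, hχ⟩)
  have hvL : pointGroup v ≤ L := by
    rcases hb.pointGroup_or_hyperplaneGroup_le hn hs (𝒮 := pointGroups n F)
      (fun X ⟨u, hu, hX⟩ => hX ▸ isRootSubgroup_pointGroup hn hu)
      (fun x _ => conj_smul_mem_pointGroups x) ncard_pointGroups_le hbL hψ
      ⟨pointGroup w, ⟨w, hw, rfl⟩, hmeet ⟨g, hgw, hχt⟩⟩ with ⟨-, h⟩ | ⟨⟨u, hu, hfu⟩, -⟩
    · exact h
    · exact (not_pointGroup_le_hyperplaneGroup (by omega) hu hfu.ge).elim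
  have hfL : hyperplaneGroup f ≤ L := by
    rcases hb.pointGroup_or_hyperplaneGroup_le hn hs (𝒮 := hyperplaneGroups n F)
      (fun X ⟨u, hu, hX⟩ => hX ▸ isRootSubgroup_hyperplaneGroup hn hu)
      (fun x _ => conj_smul_mem_hyperplaneGroups x) ncard_hyperplaneGroups_le hbL hψ
      ⟨hyperplaneGroup g, ⟨g, hg, rfl⟩, hmeet (mem_hyperplaneGroup.2 ⟨w, hgw, hχt⟩)⟩
      with ⟨⟨u, -, hvu⟩, -⟩ | ⟨-, h⟩
    · exact (not_pointGroup_le_hyperplaneGroup (by omega) hv0 hvu.le).elim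
    · exact h
  exact eq_top_of_pointGroup_le_of_hyperplaneGroup_le (by omega) hvL hfL hb.dotProduct_ne_zero

theorem eq_top_of_forall_exists_apply_mem [Finite F] (hn : 4 ≤ n) {L : Subgroup (ProjSL n F)}
    (hL : ∀ g, ∃ φ : MulAut (ProjSL n F), φ g ∈ L) : L = ⊤ := by
  obtain ⟨b, v, f, hb⟩ := exists_isPivot hn F
  obtain ⟨φ, hφ⟩ := hL b
  have hcomap : L.comap φ.toMonoidHom = ⊤ := hb.eq_top hn hφ fun g => by
    obtain ⟨ψ, hψ⟩ := hL g
    exact ⟨φ⁻¹ * ψ, by simpa using hψ⟩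
  rwa [← Subgroup.comap_top φ.toMonoidHom,
    (Subgroup.comap_injective φ.surjective).eq_iff] at hcomap

/-! ### Splitting matrices over an extension field -/

section Splitting

open Polynomial

variable {K : Type*} [Field K] [Algebra F K]

lemma nonempty_algHom_adjoinRoot_of_irreducible [Finite F] {f : F[X]} (hf : Irreducible f)
    (hdvd : finrank F K ∣ f.natDegree) : Nonempty (K →ₐ[F] AdjoinRoot f) := by
  have := Fact.mk hf
  have hfin := (AdjoinRoot.powerBasis hf.ne_zero).finite
  have : Finite (AdjoinRoot f) := Module.finite_of_finite F
  apply FiniteField.nonempty_algHom_of_finrank_dvd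
  rwa [(AdjoinRoot.powerBasis hf.ne_zero).finrank, AdjoinRoot.powerBasis_dim]

lemma algHomOfDvd_mk {f g : F[X]} (h : g ∣ f) (p : F[X]) :
    AdjoinRoot.algHomOfDvd F f g h (AdjoinRoot.mk f p) = AdjoinRoot.mk g p := by
  rw [← AdjoinRoot.aeval_eq, ← aeval_algHom_apply, AdjoinRoot.algHomOfDvd_root,
    AdjoinRoot.aeval_eq]

/-- `K` is étale over `F`, so its embeddings lift along nilpotent thickenings. -/
lemma nonempty_algHom_adjoinRoot_pow [Algebra.IsSeparable F K] {f : F[X]}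
    (h : Nonempty (K →ₐ[F] AdjoinRoot f)) {k : ℕ} (hk : k ≠ 0) :
    Nonempty (K →ₐ[F] AdjoinRoot (f ^ k)) := by
  obtain ⟨φ⟩ := h
  let π := AdjoinRoot.algHomOfDvd F (f ^ k) f (dvd_pow_self f hk)
  have hker : RingHom.ker π ≤ Ideal.span {AdjoinRoot.mk (f ^ k) f} := by
    intro x hx
    obtain ⟨g, rfl⟩ := AdjoinRoot.mk_surjective x
    rw [RingHom.mem_ker, algHomOfDvd_mk, AdjoinRoot.mk_eq_zero] at hx
    exact Ideal.mem_span_singleton.2 (map_dvd _ hx)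
  have hnil : IsNilpotent (RingHom.ker (π : AdjoinRoot (f ^ k) →+* AdjoinRoot f)) := by
    refine ⟨k, le_bot_iff.1 ((Ideal.pow_right_mono hker k).trans ?_)⟩
    rw [Ideal.span_singleton_pow, ← map_pow, AdjoinRoot.mk_self, Ideal.span_singleton_zero]
  have := Algebra.FormallyEtale.of_isSeparable F K
  refine ⟨Algebra.FormallySmooth.liftOfSurjective φ π (fun y => ?_) hnil⟩
  obtain ⟨g, rfl⟩ := AdjoinRoot.mk_surjective y
  exact ⟨_, algHomOfDvd_mk _ g⟩

lemma nonempty_algHom_adjoinRoot_mul {f g : F[X]} (hfg : IsCoprime f g)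
    (hf : Nonempty (K →ₐ[F] AdjoinRoot f)) (hg : Nonempty (K →ₐ[F] AdjoinRoot g)) :
    Nonempty (K →ₐ[F] AdjoinRoot (f * g)) := by
  obtain ⟨φ⟩ := hf
  obtain ⟨ψ⟩ := hg
  let π := (AdjoinRoot.algHomOfDvd F (f * g) f (dvd_mul_right f g)).prod
    (AdjoinRoot.algHomOfDvd F (f * g) g (dvd_mul_left g f))
  have hπ (p : F[X]) : π (AdjoinRoot.mk _ p) = (AdjoinRoot.mk f p, AdjoinRoot.mk g p) :=
    Prod.ext (algHomOfDvd_mk _ p) (algHomOfDvd_mk _ p)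
  have hinj : Function.Injective π := by
    refine (injective_iff_map_eq_zero π).2 fun x hx => ?_
    obtain ⟨p, rfl⟩ := AdjoinRoot.mk_surjective x
    rw [hπ, Prod.mk_eq_zero, AdjoinRoot.mk_eq_zero, AdjoinRoot.mk_eq_zero] at hx
    exact AdjoinRoot.mk_eq_zero.2 (hfg.mul_dvd hx.1 hx.2)
  have hsurj : Function.Surjective π := by
    rintro ⟨x, y⟩
    obtain ⟨p, rfl⟩ := AdjoinRoot.mk_surjective x
    obtain ⟨r, rfl⟩ := AdjoinRoot.mk_surjective y
    obtain ⟨a, b, hab⟩ := hfg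
    refine ⟨AdjoinRoot.mk _ (r * (a * f) + p * (b * g)), ?_⟩
    rw [hπ, Prod.mk_inj, AdjoinRoot.mk_eq_mk, AdjoinRoot.mk_eq_mk]
    exact ⟨⟨(r - p) * a, by linear_combination p * hab⟩,
      ⟨(p - r) * b, by linear_combination r * hab⟩⟩
  exact ⟨(AlgEquiv.ofBijective π ⟨hinj, hsurj⟩).symm.toAlgHom.comp (φ.prod ψ)⟩

lemma nonempty_algHom_adjoinRoot_of_isUnit {f : F[X]} (hf : IsUnit f) :
    Nonempty (K →ₐ[F] AdjoinRoot f) := by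
  have : Subsingleton (AdjoinRoot f) :=
    Ideal.Quotient.subsingleton_iff.2 (Ideal.span_singleton_eq_top.2 hf)
  exact ⟨.ofLinearMap 0 (Subsingleton.elim _ _) fun _ _ => Subsingleton.elim _ _⟩

lemma nonempty_algHom_adjoinRoot [Finite F] [FiniteDimensional F K] {χ : F[X]} (hχ : χ ≠ 0)
    (hdvd : ∀ f, Irreducible f → f ∣ χ → finrank F K ∣ f.natDegree) :
    Nonempty (K →ₐ[F] AdjoinRoot χ) := by
  induction χ using UniqueFactorizationMonoid.induction_on_coprime with
  | h0 => exact (hχ rfl).elim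
  | h1 hu => exact nonempty_algHom_adjoinRoot_of_isUnit hu
  | hpr k hp =>
    rcases eq_or_ne k 0 with rfl | hk
    · exact nonempty_algHom_adjoinRoot_of_isUnit (by rw [pow_zero]; exact isUnit_one)
    · exact nonempty_algHom_adjoinRoot_pow (nonempty_algHom_adjoinRoot_of_irreducible
        hp.irreducible (hdvd _ hp.irreducible (dvd_pow_self _ hk))) hk
  | hcp hrel hx hy =>
    obtain ⟨hx0, hy0⟩ := mul_ne_zero_iff.1 hχ
    exact nonempty_algHom_adjoinRoot_mul hrel.isCoprime
      (hx hx0 fun f hf h => hdvd f hf (h.mul_right _))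
      (hy hy0 fun f hf h => hdvd f hf (h.mul_left _))

lemma exists_algHom_commute [Finite F] [FiniteDimensional F K] (M : Matrix (Fin n) (Fin n) F)
    (hdvd : ∀ f, Irreducible f → f ∣ M.charpoly → finrank F K ∣ f.natDegree) :
    ∃ φ : K →ₐ[F] Matrix (Fin n) (Fin n) F, ∀ x, Commute M (φ x) := by
  obtain ⟨ι⟩ := nonempty_algHom_adjoinRoot M.charpoly_monic.ne_zero hdvd
  have hker (f : F[X]) (hf : f ∈ Ideal.span {M.charpoly}) : aeval M f = 0 := by
    obtain ⟨g, rfl⟩ := Ideal.mem_span_singleton.1 hf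
    rw [map_mul, aeval_self_charpoly, zero_mul]
  let ev : AdjoinRoot M.charpoly →ₐ[F] Matrix (Fin n) (Fin n) F :=
    Ideal.Quotient.liftₐ _ (aeval M) hker
  refine ⟨ev.comp ι, fun x => ?_⟩
  obtain ⟨r, hr⟩ := AdjoinRoot.mk_surjective (ι x)
  have hev : ev (ι x) = aeval M r := by rw [← hr]; rfl
  rw [AlgHom.comp_apply, hev]
  change M * aeval M r = aeval M r * M
  simpa only [map_mul, aeval_X] using congrArg (aeval M) (mul_comm X r)

lemma exists_linearEquiv_of_algHom [FiniteDimensional F K] {V W : Type*} [AddCommGroup V]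
    [AddCommGroup W] [Module F V] [Module F W] [FiniteDimensional F V] [FiniteDimensional F W]
    (φ : K →ₐ[F] End F V) (ψ : K →ₐ[F] End F W) (h : finrank F V = finrank F W) :
    ∃ e : V ≃ₗ[F] W, ∀ x v, e (φ x v) = ψ x (e v) := by
  let _ := Module.compHom V φ.toRingHom
  let _ := Module.compHom W ψ.toRingHom
  have : IsScalarTower F K V := ⟨fun a x v => congrArg (· v) (map_smul φ a x)⟩
  have : IsScalarTower F K W := ⟨fun a x v => congrArg (· v) (map_smul ψ a x)⟩
  have := Module.Finite.right F K V
  have := Module.Finite.right F K W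
  have hK : finrank K V = finrank K W := by
    rw [← Nat.mul_right_inj (finrank_pos (R := F) (M := K)).ne', finrank_mul_finrank,
      finrank_mul_finrank, h]
  exact ⟨(LinearEquiv.ofFinrankEq V W hK).restrictScalars F,
    (LinearEquiv.ofFinrankEq V W hK).map_smul⟩

lemma exists_GL_mul_eq_mul [FiniteDimensional F K] (φ ψ : K →ₐ[F] Matrix (Fin n) (Fin n) F) :
    ∃ P : GL (Fin n) F, ∀ x, P.1 * φ x = ψ x * P.1 := by
  obtain ⟨e, he⟩ := exists_linearEquiv_of_algHom ((toLinAlgEquiv' (R := F)).toAlgHom.comp φ)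
    ((toLinAlgEquiv' (R := F)).toAlgHom.comp ψ) rfl
  let P := GeneralLinearGroup.toLin.symm (LinearMap.GeneralLinearGroup.ofLinearEquiv e)
  have hP (v : Fin n → F) : P.1 *ᵥ v = e v := LinearMap.congr_fun (toLin'_toMatrix' e.toLinearMap) v
  refine ⟨P, fun x => mulVec_injective (funext fun v => ?_)⟩
  rw [← mulVec_mulVec, ← mulVec_mulVec, hP, hP]
  exact he x v

lemma exists_algHom_matrix [FiniteDimensional F K] {m : ℕ} (hn : m * finrank F K = n) :
    Nonempty (K →ₐ[F] Matrix (Fin n) (Fin n) F) := by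
  have b := finBasisOfFinrankEq F (Fin m → K) (n := n) (by rw [finrank_pi_fintype]; simpa using hn)
  exact ⟨(Algebra.leftMulMatrix b).comp ((Algebra.ofId K (Fin m → K)).restrictScalars F)⟩

lemma exists_eq_algebraMap_of_forall_mulVec (hn : n ≠ 0) (φ : K →ₐ[F] Matrix (Fin n) (Fin n) F)
    {x : K} (hx : ∀ v, ∃ c : F, φ x *ᵥ v = c • v) : ∃ c, algebraMap F K c = x := by
  have := NeZero.mk hn
  obtain ⟨v, hv⟩ := exists_ne (0 : Fin n → F)
  obtain ⟨c, hc⟩ := hx v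
  refine ⟨c, (sub_eq_zero.1 (by_contra fun hne => hv ?_)).symm⟩
  have hzero : φ (x - algebraMap F K c) *ᵥ v = 0 := by
    rw [map_sub, AlgHom.commutes, sub_mulVec, hc, Algebra.algebraMap_eq_smul_one, smul_mulVec,
      one_mulVec, sub_self]
  rw [← one_mulVec v, ← map_one φ, ← inv_mul_cancel₀ hne, map_mul, ← mulVec_mulVec, hzero,
    mulVec_zero]

lemma two_dvd_natDegree_of_dvd {χ f : F[X]} (hχ : χ.natDegree = 4) (hroot : ∀ x, χ.eval x ≠ 0)
    (hf : Irreducible f) (hdvd : f ∣ χ) : 2 ∣ f.natDegree := by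
  have hdeg {g : F[X]} (hg : g ∣ χ) : g.natDegree ≠ 1 := fun h1 => by
    obtain ⟨x, hx⟩ := exists_root_of_degree_eq_one
      ((degree_eq_iff_natDegree_eq_of_pos one_pos).2 h1)
    exact hroot x (eval_eq_zero_of_dvd_of_eval_eq_zero hg hx)
  have hpos := hf.natDegree_pos
  have hf1 := hdeg hdvd
  obtain ⟨g, rfl⟩ := hdvd
  have hg0 : g ≠ 0 := fun h => hroot 0 (by rw [h, mul_zero, eval_zero])
  have hg1 := hdeg (dvd_mul_left g f)
  rw [natDegree_mul hf.ne_zero hg0] at hχ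
  omega

end Splitting

/-! ### The upper bound -/

lemma mem_normalizer_iff_conj_smul_eq {G : Type*} [Group G] {X : Subgroup G} {x : G} :
    x ∈ Subgroup.normalizer (X : Set G) ↔ MulAut.conj x • X = X :=
  Subgroup.mem_normalizer_iff_map_conj_eq

lemma normalizer_pointGroup_ne_top (hn : 3 ≤ n) {v : Fin n → F} (hv : v ≠ 0) :
    Subgroup.normalizer (pointGroup v : Set (ProjSL n F)) ≠ ⊤ := by
  intro h
  obtain ⟨f, hfv⟩ := exists_dotProduct_eq_one hv
  rw [dotProduct_comm] at hfv
  obtain ⟨w, hw, hfw⟩ := exists_dotProduct_eq_zero (m := 1) (by omega) ![f]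
  replace hfw : f ⬝ᵥ w = 0 := hfw 0
  have hmem : mk (transv w f hfw) ∈ Subgroup.normalizer (pointGroup v : Set (ProjSL n F)) :=
    h ▸ Subgroup.mem_top _
  rw [mem_normalizer_iff_conj_smul_eq, conj_mk_smul_pointGroup] at hmem
  obtain ⟨c, hc⟩ := exists_smul_of_pointGroup_le hn hmem.le
  rw [transv_coe, add_mulVec, one_mulVec, vecMulVec_mulVec_eq, hfv, one_smul] at hc
  have hc1 := congrArg (f ⬝ᵥ ·) hc
  simp only [dotProduct_add, dotProduct_smul, hfv, hfw, add_zero, smul_eq_mul, mul_one] at hc1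
  rw [← hc1, one_smul, add_eq_left] at hc
  exact hw hc

/-- The subgroup of elements of `G` fixed by the automorphism `φ`. -/
def fixedSubgroup {G : Type*} [Group G] (φ : MulAut G) : Subgroup G :=
  φ.toMonoidHom.eqLocus (.id G)

lemma mem_fixedSubgroup {G : Type*} [Group G] {φ : MulAut G} {x : G} :
    x ∈ fixedSubgroup φ ↔ φ x = x := Iff.rfl

lemma exists_smul_of_fixedSubgroup_eq_top (hn : 3 ≤ n) {P : GL (Fin n) F}
    (h : fixedSubgroup (liftAut (conjGL P)) = ⊤) (v : Fin n → F) : ∃ c : F, P.1 *ᵥ v = c • v := by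
  have hone : liftAut (conjGL P) = 1 := MulEquiv.ext ((Subgroup.eq_top_iff' _).1 h)
  refine exists_smul_of_pointGroup_le hn (Eq.le ?_)
  rw [← liftAut_conjGL_smul_pointGroup, hone, one_smul]

lemma exists_apply_mem_normalizer_pointGroup {g : SL(n, F)} {v w : Fin n → F} {c : F} (hv : v ≠ 0)
    (hw : w ≠ 0) (hgw : g.1 *ᵥ w = c • w) :
    ∃ φ : MulAut (ProjSL n F),
      φ (mk g) ∈ Subgroup.normalizer (pointGroup v : Set (ProjSL n F)) := by
  obtain ⟨P, hP, rfl, -⟩ := exists_mulVec_eq hv hw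
  have hc : c ≠ 0 := by
    rintro rfl
    exact mulVec_ne_zero g hw (hgw.trans (zero_smul F w))
  have hfix : MulAut.conj (mk g) • pointGroup w = pointGroup w := by
    rw [conj_mk_smul_pointGroup, hgw]
    exact le_antisymm (pointGroup_le_pointGroup ⟨c, rfl⟩)
      (pointGroup_le_pointGroup ⟨c⁻¹, (inv_smul_smul₀ hc w).symm⟩)
  refine ⟨liftAut (conjGL (.mkOfDetNeZero P hP)), mem_normalizer_iff_conj_smul_eq.2 ?_⟩
  have hPw : liftAut (conjGL (.mkOfDetNeZero P hP)) • pointGroup w = pointGroup (P *ᵥ w) :=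
    liftAut_conjGL_smul_pointGroup _ w
  rw [← hPw, conj_apply_smul, hfix]

lemma exists_apply_mem_fixedSubgroup [Finite F] {K : Type*} [Field K] [Algebra F K]
    [FiniteDimensional F K] (φ : K →ₐ[F] Matrix (Fin n) (Fin n) F) (u : Kˣ) {g : SL(n, F)}
    (hg : ∀ f, Irreducible f → f ∣ g.1.charpoly → finrank F K ∣ f.natDegree) :
    ∃ α : MulAut (ProjSL n F), α (mk g) ∈ fixedSubgroup (liftAut (conjGL (Units.map φ u))) := by
  obtain ⟨ψ, hψ⟩ := exists_algHom_commute g.1 hg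
  obtain ⟨P, hP⟩ := exists_GL_mul_eq_mul ψ φ
  have hPu : P * Units.map ψ u = Units.map φ u * P := Units.ext (hP u)
  have hgu : conjGL (Units.map ψ u) g = g := Subtype.ext <| by
    rw [conjGL_coe, show (Units.map ψ u).1 * g.1 = g.1 * (Units.map ψ u).1 from (hψ u).eq.symm,
      Units.mul_inv_cancel_right]
  refine ⟨liftAut (conjGL P), mem_fixedSubgroup.2 ?_⟩
  rw [← MulAut.mul_apply, ← map_mul, ← map_mul, ← hPu, map_mul, map_mul, MulAut.mul_apply,
    liftAut_mk, hgu]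

lemma exists_covering [Finite F] : ∃ H K : Subgroup (ProjSL 4 F), H ≠ ⊤ ∧ K ≠ ⊤ ∧
    ∀ x, ∃ φ : MulAut (ProjSL 4 F), φ x ∈ H ∨ φ x ∈ K := by
  obtain ⟨K, _, _, _, hK⟩ := exists_finite_extension F two_ne_zero
  have : FiniteDimensional F K := .of_finite
  obtain ⟨φ⟩ := exists_algHom_matrix (F := F) (K := K) (m := 2) (n := 4) (by rw [hK])
  obtain ⟨x, hx⟩ : ∃ x : K, x ∉ Set.range (algebraMap F K) := by
    by_contra! hsurj
    have hbot : (⊥ : Subalgebra F K) = ⊤ := top_unique fun y _ => Algebra.mem_bot.2 (hsurj y)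
    rw [Subalgebra.bot_eq_top_iff_finrank_eq_one, hK] at hbot
    omega
  have hx0 : x ≠ 0 := fun h => hx ⟨0, by rw [h, map_zero]⟩
  obtain ⟨v, hv⟩ := exists_ne (0 : Fin 4 → F)
  refine ⟨_, fixedSubgroup (liftAut (conjGL (Units.map φ (.mk0 x hx0)))),
    normalizer_pointGroup_ne_top (by norm_num) hv, fun h => hx ?_,
    mk_surjective.forall.2 fun g => ?_⟩
  · exact exists_eq_algebraMap_of_forall_mulVec four_ne_zero φ
      (exists_smul_of_fixedSubgroup_eq_top (by norm_num) h)
  · by_cases hroot : ∃ c, g.1.charpoly.eval c = 0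
    · obtain ⟨c, hc⟩ := hroot
      rw [eval_charpoly, ← exists_mulVec_eq_zero_iff] at hc
      obtain ⟨w, hw, hgw⟩ := hc
      rw [sub_mulVec, sub_eq_zero, scalar_apply, ← smul_one_eq_diagonal, smul_mulVec,
        one_mulVec] at hgw
      exact (exists_apply_mem_normalizer_pointGroup hv hw hgw.symm).imp fun _ => .inl
    · push Not at hroot
      refine (exists_apply_mem_fixedSubgroup φ _ fun f hf hdvd => ?_).imp fun _ => .inr
      rw [hK]
      exact two_dvd_natDegree_of_dvd (by simp) hroot hf hdvd

end ProjSL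

/-- **The weak normal covering number of `PSL₄(q)` equals 2** for every prime power `q`. -/
theorem gammaW_PSL4_eq_two (q : ℕ) (hq : IsPrimePow q)
    (F : Type*) [Field F] [Fintype F] (hF : Fintype.card F = q) :
    (∃ H K : Subgroup (ProjSL 4 F), H ≠ ⊤ ∧ K ≠ ⊤ ∧
        ∀ g : ProjSL 4 F,
          ∃ φ : ProjSL 4 F ≃* ProjSL 4 F, φ g ∈ H ∨ φ g ∈ K) ∧
      ¬ ∃ L : Subgroup (ProjSL 4 F), L ≠ ⊤ ∧
          ∀ g : ProjSL 4 F,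
            ∃ φ : ProjSL 4 F ≃* ProjSL 4 F, φ g ∈ L := by
  refine ⟨ProjSL.exists_covering, ?_⟩
  rintro ⟨L, hL, hcover⟩
  exact hL (ProjSL.eq_top_of_forall_exists_apply_mem le_rfl hcover)
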